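/- arXiv:1606.05957 — 4 statements merged into one kernel-verified Lean document; each statement's English description precedes it below -/
import Mathlib

section
/- Let k = (k_1,…,k_s) be a sequence of positive integers with n = k_1+…+k_s, and let λ = (λ_1,…,λ_n) be a weakly decreasing sequence of real numbers whose block structure is given by k (i.e., λ is constant on each block n_{i-1}+1,…,n_i and strictly decreases between consecutive blocks). Then there is an order isomorphism φ from the poset of faces of the Gelfand–Cetlin polytope P_λ (ordered by inclusion) to the poset of faces of the ladder diagram Γ_k (ordered by inclusion of subgraphs) such that dim φ(F) = dim F for every face F of P_λ. -/
open Classical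

noncomputable section

/-- Partial sums of the (0-indexed) sequence `k`: `nseq k i = k 0 + ⋯ + k (i-1)`;
so `nseq k i` is the paper's `n_i` for the sequence `(k_1, …, k_s) = (k 0, …, k (s-1))`. -/
def nseq (k : ℕ → ℕ) (i : ℕ) : ℕ := ∑ j ∈ Finset.range i, k j

/-- The set of terminal vertices `T_k = {(n_i, n - n_i) : 0 ≤ i ≤ s}` of the ladder diagram. -/
def terminals (s : ℕ) (k : ℕ → ℕ) : Set (ℕ × ℕ) :=
  {v | ∃ i ≤ s, v = (nseq k i, nseq k s - nseq k i)}

/-- The vertex set of the ladder diagram `Γ_k`. -/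
def ladderV (s : ℕ) (k : ℕ → ℕ) : Set (ℕ × ℕ) :=
  {v | ∃ t ∈ terminals s k, v.1 ≤ t.1 ∧ v.2 ≤ t.2}

/-- A unit grid step: one step to the right or one step up. -/
def gridStep (v w : ℕ × ℕ) : Prop :=
  w = (v.1 + 1, v.2) ∨ w = (v.1, v.2 + 1)

/-- The edge set of the ladder diagram `Γ_k`. -/
def ladderE (s : ℕ) (k : ℕ → ℕ) : Set ((ℕ × ℕ) × (ℕ × ℕ)) :=
  {e | e.1 ∈ ladderV s k ∧ e.2 ∈ ladderV s k ∧ gridStep e.1 e.2}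

/-- A combinatorial (directed) graph in the grid `ℤ_{≥0} × ℤ_{≥0}`,
given by a set of vertices and a set of edges. -/
@[ext] structure LGraph where
  V : Set (ℕ × ℕ)
  E : Set ((ℕ × ℕ) × (ℕ × ℕ))

/-- Subgraph inclusion order on grid graphs. -/
instance : PartialOrder LGraph where
  le γ γ' := γ.V ⊆ γ'.V ∧ γ.E ⊆ γ'.E
  le_refl γ := ⟨subset_rfl, subset_rfl⟩
  le_trans a b c h h' := ⟨h.1.trans h'.1, h.2.trans h'.2⟩
  le_antisymm a b h h' := LGraph.ext (subset_antisymm h.1 h'.1) (subset_antisymm h.2 h'.2)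

/-- The ladder diagram `Γ_k` as a grid graph. -/
def ladder (s : ℕ) (k : ℕ → ℕ) : LGraph :=
  ⟨ladderV s k, ladderE s k⟩

/-- A positive path: (the graph of) a shortest path in the ladder diagram `Γ_k`
from the origin `(0,0)` to a terminal vertex. -/
def IsPositivePath (s : ℕ) (k : ℕ → ℕ) (p : LGraph) : Prop :=
  ∃ (m : ℕ) (f : ℕ → ℕ × ℕ),
    f 0 = (0, 0) ∧ f m ∈ terminals s k ∧
    (∀ i < m, gridStep (f i) (f (i + 1))) ∧
    (∀ i ≤ m, f i ∈ ladderV s k) ∧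
    p.V = {v | ∃ i ≤ m, v = f i} ∧
    p.E = {e | ∃ i < m, e = (f i, f (i + 1))}

/-- A face of the ladder diagram `Γ_k`: a subgraph which contains all terminal
vertices and is a union of positive paths. -/
def IsLadderFace (s : ℕ) (k : ℕ → ℕ) (γ : LGraph) : Prop :=
  terminals s k ⊆ γ.V ∧
  ∃ P : Set LGraph, (∀ p ∈ P, IsPositivePath s k p) ∧
    γ.V = ⋃ p ∈ P, LGraph.V p ∧ γ.E = ⋃ p ∈ P, LGraph.E p

/-- The dimension (first Betti number) of a face of a ladder diagram:
`|E(γ)| - |V(γ)| + 1`. -/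
def ldim (γ : LGraph) : ℤ :=
  (γ.E.ncard : ℤ) - (γ.V.ncard : ℤ) + 1

/-- The index set `I = {(i,j) : i,j ≥ 1, i+j ≤ n}` of the coordinates of a
Gelfand–Cetlin pattern. -/
def GCIdx (n : ℕ) : Set (ℕ × ℕ) := {p | 1 ≤ p.1 ∧ 1 ≤ p.2 ∧ p.1 + p.2 ≤ n}

/-- The entries of a Gelfand–Cetlin pattern `x`, extended by the boundary
condition `x_{i, n+1-i} = λ_i`. -/
def gcEntry (n : ℕ) (lam : ℕ → ℝ) (x : GCIdx n → ℝ) (p : ℕ × ℕ) : ℝ :=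
  if h : p ∈ GCIdx n then x ⟨p, h⟩ else lam p.1

/-- The Gelfand–Cetlin polytope `P_λ`: the set of points `(x_{i,j})_{(i,j) ∈ I}`
with `x_{i,j+1} ≥ x_{i,j} ≥ x_{i+1,j}` for all `(i,j) ∈ I`, where
`x_{i,n+1-i} = λ_i`. -/
def GCPoly (n : ℕ) (lam : ℕ → ℝ) : Set (GCIdx n → ℝ) :=
  {x | ∀ i j : ℕ, (i, j) ∈ GCIdx n →
    gcEntry n lam x (i, j) ≤ gcEntry n lam x (i, j + 1) ∧
    gcEntry n lam x (i + 1, j) ≤ gcEntry n lam x (i, j)}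

/-- The subset of `P_λ` obtained by turning the inequalities
`x_{i,j+1} ≥ x_{i,j}` for `(i,j) ∈ SH` and `x_{i,j} ≥ x_{i+1,j}` for
`(i,j) ∈ SV` into equalities. -/
def GCFaceOf (n : ℕ) (lam : ℕ → ℝ) (SH SV : Set (ℕ × ℕ)) : Set (GCIdx n → ℝ) :=
  {x | x ∈ GCPoly n lam ∧
    (∀ p ∈ SH, gcEntry n lam x (p.1, p.2 + 1) = gcEntry n lam x p) ∧
    (∀ p ∈ SV, gcEntry n lam x p = gcEntry n lam x (p.1 + 1, p.2))}

/-- A face of the GC polytope: a nonempty solution set of the system obtained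
by replacing some of the defining inequalities by equalities. -/
def IsGCFace (n : ℕ) (lam : ℕ → ℝ) (F : Set (GCIdx n → ℝ)) : Prop :=
  F.Nonempty ∧ ∃ SH SV : Set (ℕ × ℕ), SH ⊆ GCIdx n ∧ SV ⊆ GCIdx n ∧
    F = GCFaceOf n lam SH SV

/-- The dimension of (a face of) the GC polytope: the dimension of its affine span. -/
def GCdim (n : ℕ) (F : Set (GCIdx n → ℝ)) : ℕ :=
  Module.finrank ℝ (affineSpan ℝ F).direction

/-- `lam` (1-indexed) is weakly decreasing with block structure `k`: it is
constant on each block `(n_{i-1}, n_i]` and strictly decreases between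
consecutive blocks. -/
def HasBlockStructure (s : ℕ) (k : ℕ → ℕ) (lam : ℕ → ℝ) : Prop :=
  (∀ i < s, ∀ a b : ℕ, nseq k i < a → a ≤ b → b ≤ nseq k (i + 1) → lam a = lam b) ∧
  (∀ i : ℕ, 1 ≤ i → i < s → lam (nseq k i + 1) < lam (nseq k i))

/-- The edge set of the graph `φ(F)` associated to a subset `F` of the GC polytope. -/
def phiE (n : ℕ) (lam : ℕ → ℝ) (F : Set (GCIdx n → ℝ)) :
    Set ((ℕ × ℕ) × (ℕ × ℕ)) :=
  {e | (∃ i < n, e = ((0, i), (0, i + 1)) ∨ e = ((i, 0), (i + 1, 0))) ∨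
    (∃ i j : ℕ, (i, j) ∈ GCIdx n ∧ e = ((i - 1, j), (i, j)) ∧
      ∃ x ∈ F, gcEntry n lam x (i, j) < gcEntry n lam x (i, j + 1)) ∨
    (∃ i j : ℕ, (i, j) ∈ GCIdx n ∧ e = ((i, j - 1), (i, j)) ∧
      ∃ x ∈ F, gcEntry n lam x (i + 1, j) < gcEntry n lam x (i, j))}

/-- The graph `φ(F)`: its edges are given by `phiE` and its vertices are the
endpoints of its edges. -/
def phiGC (n : ℕ) (lam : ℕ → ℝ) (F : Set (GCIdx n → ℝ)) : LGraph where
  V := {v | ∃ e ∈ phiE n lam F, v = e.1 ∨ v = e.2}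
  E := phiE n lam F

/-- The map `ψ`: for a subgraph `γ`, the set of points of `P_λ` where the
inequalities corresponding to the missing edges of `γ` become equalities. -/
def psiGC (n : ℕ) (lam : ℕ → ℝ) (γ : LGraph) : Set (GCIdx n → ℝ) :=
  {x | x ∈ GCPoly n lam ∧ ∀ i j : ℕ, (i, j) ∈ GCIdx n →
    (((i - 1, j), (i, j)) ∉ γ.E → gcEntry n lam x (i, j) = gcEntry n lam x (i, j + 1)) ∧
    (((i, j - 1), (i, j)) ∉ γ.E → gcEntry n lam x (i, j) = gcEntry n lam x (i + 1, j))}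
/-- The recursively defined point `x̄` of the proof of Lemma 2.6 (bijectivity):
`x̄_{i,j} = λ_i` if `i + j = n + 1`, and for `i + j ≤ n` it is determined from
`x̄_{i,j+1}` and `x̄_{i+1,j}` according to which of the two edges
`((i-1,j),(i,j))`, `((i,j-1),(i,j))` belong to `E`. -/
def barX (n : ℕ) (lam : ℕ → ℝ) (E : Set ((ℕ × ℕ) × (ℕ × ℕ))) : ℕ → ℕ → ℝ
  | i, j =>
    if h1 : n + 1 ≤ i + j then lam i
    else if h2 : ((i - 1, j), (i, j)) ∈ E then
      if h3 : ((i, j - 1), (i, j)) ∈ E then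
        (barX n lam E i (j + 1) + barX n lam E (i + 1) j) / 2
      else barX n lam E (i + 1) j
    else barX n lam E i (j + 1)
  termination_by i j => n + 1 - (i + j)
  decreasing_by all_goals omega

/-- `α, β : ℕ → ℕ` encode an element
`w = ((α_1,β_1),…,(α_{s-1},β_{s-1})) ∈ W_{s-1}`, with the conventions
`α_0 = 0`, `β_0 = 1`, `α_s = 1`, `β_s = 0`. -/
def IsW (s : ℕ) (α β : ℕ → ℕ) : Prop :=
  (∀ i : ℕ, 1 ≤ i → i < s →
    (α i, β i) = (1, 0) ∨ (α i, β i) = (0, 1) ∨ (α i, β i) = (1, 1)) ∧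
  α 0 = 0 ∧ β 0 = 1 ∧ α s = 1 ∧ β s = 0

/-- The edge set of the subgraph `g_w` of `Γ_k`: the horizontal edge into the
terminal vertex `v_i` when `α_i = 1` and the vertical edge into `v_i` when
`β_i = 1`. -/
def gwE (s : ℕ) (k α β : ℕ → ℕ) : Set ((ℕ × ℕ) × (ℕ × ℕ)) :=
  {e | ∃ i ≤ s,
    (α i = 1 ∧
      e = ((nseq k i - 1, nseq k s - nseq k i), (nseq k i, nseq k s - nseq k i))) ∨
    (β i = 1 ∧
      e = ((nseq k i, nseq k s - nseq k i - 1), (nseq k i, nseq k s - nseq k i)))}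

/-- The subgraph `g_w` of `Γ_k`. -/
def gwGraph (s : ℕ) (k α β : ℕ → ℕ) : LGraph where
  V := {v | ∃ e ∈ gwE s k α β, v = e.1 ∨ v = e.2}
  E := gwE s k α β

/-- The interleaved sequence `r_w(k) * w̃` of length `2s - 1` (0-indexed):
entry `2j` is `k''_{j+1} = k_{j+1} + 1 - α_{j+1} - β_j` and entry `2j + 1` is
`w̃_{j+1} = α_{j+1} β_{j+1}`. -/
def rstar (s : ℕ) (k α β : ℕ → ℕ) (t : ℕ) : ℕ :=
  if t % 2 = 0 then k (t / 2) + 1 - α (t / 2 + 1) - β (t / 2)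
  else α (t / 2 + 1) * β (t / 2 + 1)

/-- `α`-value of one of the three symbols `(1,0), (0,1), (1,1)`,
encoded as `0, 1, 2 : Fin 3` respectively. -/
def aW3 (c : Fin 3) : ℕ := if c = 1 then 0 else 1

/-- `β`-value of one of the three symbols `(1,0), (0,1), (1,1)`,
encoded as `0, 1, 2 : Fin 3` respectively. -/
def bW3 (c : Fin 3) : ℕ := if c = 0 then 0 else 1

/-- The function `α` of the element of `W_{s-1}` encoded by
`c : Fin (s-1) → Fin 3` (with the conventions `α_0 = 0`, `α_s = 1`). -/
def alph (s : ℕ) (c : Fin (s - 1) → Fin 3) (i : ℕ) : ℕ :=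
  if i = 0 then 0 else if h : i - 1 < s - 1 then aW3 (c ⟨i - 1, h⟩) else 1

/-- The function `β` of the element of `W_{s-1}` encoded by
`c : Fin (s-1) → Fin 3` (with the conventions `β_0 = 1`, `β_s = 0`). -/
def bet (s : ℕ) (c : Fin (s - 1) → Fin 3) (i : ℕ) : ℕ :=
  if i = 0 then 1 else if h : i - 1 < s - 1 then bW3 (c ⟨i - 1, h⟩) else 0

/-- The interleaved sequence `r_w(k) * w̃` (of length `2s - 1`, 0-indexed) for
the element `w ∈ W_{s-1}` encoded by `c`. -/
def newk (s : ℕ) (c : Fin (s - 1) → Fin 3) (k : ℕ → ℕ) (t : ℕ) : ℕ :=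
  if t % 2 = 0 then k (t / 2) + 1 - alph s c (t / 2 + 1) - bet s c (t / 2)
  else alph s c (t / 2 + 1) * bet s c (t / 2 + 1)

/-- `|w| = Σ_{i=1}^{s-1} α_i β_i` for the element `w ∈ W_{s-1}` encoded by `c`. -/
def wsize (s : ℕ) (c : Fin (s - 1) → Fin 3) : ℕ :=
  ∑ j ∈ Finset.range (s - 1), alph s c (j + 1) * bet s c (j + 1)

/-- The subgraph `g_w` of `Γ_k` for the element `w ∈ W_{s-1}` encoded by `c`. -/
def gwGraph3 (s : ℕ) (k : ℕ → ℕ) (c : Fin (s - 1) → Fin 3) : LGraph :=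
  gwGraph s k (alph s c) (bet s c)

/-- Union of two grid graphs (union of vertex sets and of edge sets). -/
def ugraph (γ δ : LGraph) : LGraph := ⟨γ.V ∪ δ.V, γ.E ∪ δ.E⟩

/-- The generating function `F_k(t) = Σ_{γ face of Γ_k} t^{dim γ}` of the
`f`-vector of the ladder diagram `Γ_k`, as a formal power series in `t`:
the coefficient of `t^d` is the number of faces of `Γ_k` of dimension `d`. -/
def fpol (s : ℕ) (k : ℕ → ℕ) : PowerSeries ℤ :=
  PowerSeries.mk fun d =>
    (Set.ncard {γ : LGraph | IsLadderFace s k γ ∧ ldim γ = (d : ℤ)} : ℤ)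

/-- The operator `Π_{i=1}^{s-1} (∂/∂x_i + ∂/∂x_{i+1} + t ∂/∂y_i)` applied to a
polynomial in the variables `x_1, x_2, … , y_1, y_2, …` (the variable `x_{i+1}`
is `Sum.inl i` and `y_{i+1}` is `Sum.inr i`) over `ℚ[t]`. -/
def Lfold (s : ℕ) (f : MvPolynomial (ℕ ⊕ ℕ) (Polynomial ℚ)) :
    MvPolynomial (ℕ ⊕ ℕ) (Polynomial ℚ) :=
  (List.range (s - 1)).foldl
    (fun g i =>
      MvPolynomial.pderiv (Sum.inl i) g + MvPolynomial.pderiv (Sum.inl (i + 1)) g +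
        (Polynomial.X : Polynomial ℚ) • MvPolynomial.pderiv (Sum.inr i) g) f

/-- The operator `D_w = Π_{i=1}^{s-1} (∂/∂x_i)^{1-α_i} (∂/∂x_{i+1})^{1-β_i}
(t ∂/∂y_i)^{α_i β_i}` for the element `w ∈ W_{s-1}` encoded by
`c : Fin (s-1) → Fin 3` (`0 ↦ (1,0)`, `1 ↦ (0,1)`, `2 ↦ (1,1)`). -/
def DfoldC (s : ℕ) (c : Fin (s - 1) → Fin 3)
    (f : MvPolynomial (ℕ ⊕ ℕ) (Polynomial ℚ)) : MvPolynomial (ℕ ⊕ ℕ) (Polynomial ℚ) :=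
  (List.finRange (s - 1)).foldl
    (fun g i =>
      if c i = 0 then MvPolynomial.pderiv (Sum.inl ((i : ℕ) + 1)) g
      else if c i = 1 then MvPolynomial.pderiv (Sum.inl (i : ℕ)) g
      else (Polynomial.X : Polynomial ℚ) • MvPolynomial.pderiv (Sum.inr (i : ℕ)) g) f

/-- The operator `D_w` for the element `w ∈ W_{s-1}` encoded by `α, β : ℕ → ℕ`. -/
def DfoldW (s : ℕ) (α β : ℕ → ℕ)
    (f : MvPolynomial (ℕ ⊕ ℕ) (Polynomial ℚ)) : MvPolynomial (ℕ ⊕ ℕ) (Polynomial ℚ) :=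
  (List.range (s - 1)).foldl
    (fun g j =>
      if α (j + 1) = 1 ∧ β (j + 1) = 1 then
        (Polynomial.X : Polynomial ℚ) • MvPolynomial.pderiv (Sum.inr j) g
      else if α (j + 1) = 1 then MvPolynomial.pderiv (Sum.inl (j + 1)) g
      else MvPolynomial.pderiv (Sum.inl j) g) f

/-- Substitution of `0` for all the variables `y_j = Sum.inr j`. -/
def setYzero :
    MvPolynomial (ℕ ⊕ ℕ) (Polynomial ℚ) →ₐ[Polynomial ℚ] MvPolynomial (ℕ ⊕ ℕ) (Polynomial ℚ) :=
  MvPolynomial.aeval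
    (Sum.elim (fun i => MvPolynomial.X (Sum.inl i)) fun _ => (0 : MvPolynomial (ℕ ⊕ ℕ) (Polynomial ℚ)))
end

noncomputable section helpers

structure GoodFace (n : ℕ) (T : Set (ℕ × ℕ)) (γ : LGraph) : Prop where
  term : T ⊆ γ.V
  edge : ∀ u v, (u, v) ∈ γ.E → gridStep u v ∧ u ∈ γ.V ∧ v ∈ γ.V
  inn : ∀ a b, (a, b) ∈ γ.V → (a, b) = (0, 0) ∨ (1 ≤ a ∧ ((a - 1, b), (a, b)) ∈ γ.E) ∨
    (1 ≤ b ∧ ((a, b - 1), (a, b)) ∈ γ.E)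
  out : ∀ a b, (a, b) ∈ γ.V → (a, b) ∈ T ∨ ((a, b), (a + 1, b)) ∈ γ.E ∨
    ((a, b), (a, b + 1)) ∈ γ.E
  bd : ∀ a b, (a, b) ∈ γ.V → a + b ≤ n

lemma nseq_mono (k : ℕ → ℕ) {i j : ℕ} (h : i ≤ j) : nseq k i ≤ nseq k j :=
  Finset.sum_le_sum_of_subset (Finset.range_mono h)

lemma nseq_succ (k : ℕ → ℕ) (i : ℕ) : nseq k (i + 1) = nseq k i + k i :=
  Finset.sum_range_succ _ _

lemma term_sum {s : ℕ} {k : ℕ → ℕ} {v : ℕ × ℕ} (h : v ∈ terminals s k) :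
    v.1 + v.2 = nseq k s := by
  obtain ⟨i, hi, rfl⟩ := h
  have := nseq_mono k hi
  simp only; omega

lemma term_left (s : ℕ) (k : ℕ → ℕ) : (0, nseq k s) ∈ terminals s k :=
  ⟨0, Nat.zero_le _, by simp [nseq]⟩

lemma term_right (s : ℕ) (k : ℕ → ℕ) : (nseq k s, 0) ∈ terminals s k :=
  ⟨s, le_rfl, by simp⟩

lemma exists_block (k : ℕ → ℕ) (s a : ℕ) (h1 : 1 ≤ a) (h2 : a ≤ nseq k s) :
    ∃ j < s, nseq k j < a ∧ a ≤ nseq k (j + 1) := by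
  induction s with
  | zero => simp [nseq] at h2; omega
  | succ s ih =>
    by_cases h : a ≤ nseq k s
    · obtain ⟨j, hj, h⟩ := ih h
      exact ⟨j, by omega, h⟩
    · exact ⟨s, by omega, by omega, h2⟩

lemma lam_step {s : ℕ} {k : ℕ → ℕ} {lam : ℕ → ℝ}
    (hlam : HasBlockStructure s k lam) (i j : ℕ) (hi : 1 ≤ i) (hj : 1 ≤ j)
    (hij : i + j = nseq k s) :
    lam (i + 1) ≤ lam i ∧ (lam (i + 1) < lam i ↔ (i, j) ∈ terminals s k) := by
  obtain ⟨b, hb, h1, h2⟩ := exists_block k s i hi (by omega)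
  rcases h2.lt_or_eq with h2 | h2
  · have := hlam.1 b hb i (i + 1) h1 (by omega) h2
    refine ⟨this.ge, ⟨fun h => absurd this h.ne', ?_⟩⟩
    rintro ⟨c, hc, hcc⟩
    have hci : i = nseq k c := congrArg Prod.fst hcc
    rcases le_or_gt c b with h | h
    · have := nseq_mono k h; omega
    · have := nseq_mono k (show b + 1 ≤ c by omega); omega
  · have hbs : b + 1 < s := by
      rcases Nat.lt_or_ge (b + 1) s with h | h
      · exact h
      · have := nseq_mono k h; omega
    have := hlam.2 (b + 1) (by omega) hbs
    rw [← h2] at this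
    refine ⟨this.le, fun _ => ⟨b + 1, hbs.le, ?_⟩, fun _ => this⟩
    rw [← h2, ← hij]; simp

lemma good_of_face {s : ℕ} {k : ℕ → ℕ} {γ : LGraph} (h : IsLadderFace s k γ) :
    GoodFace (nseq k s) (terminals s k) γ := by
  obtain ⟨hT, P, hP, hV, hE⟩ := h
  have key : ∀ v ∈ γ.V, ∃ (m : ℕ) (f : ℕ → ℕ × ℕ) (i : ℕ), i ≤ m ∧ v = f i ∧
      f 0 = (0, 0) ∧ f m ∈ terminals s k ∧
      (∀ i < m, gridStep (f i) (f (i + 1))) ∧ (∀ i ≤ m, f i ∈ ladderV s k) ∧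
      (∀ i < m, (f i, f (i + 1)) ∈ γ.E) := by
    intro v hv
    rw [hV] at hv
    simp only [Set.mem_iUnion] at hv
    obtain ⟨p, hp, hv⟩ := hv
    obtain ⟨m, f, h0, hm, hs, hl, hpV, hpE⟩ := hP p hp
    rw [hpV] at hv
    obtain ⟨i, hi, rfl⟩ := hv
    refine ⟨m, f, i, hi, rfl, h0, hm, hs, hl, fun i hi => ?_⟩
    rw [hE]
    simp only [Set.mem_iUnion]
    exact ⟨p, hp, by rw [hpE]; exact ⟨i, hi, rfl⟩⟩
  refine ⟨hT, ?_, ?_, ?_, ?_⟩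
  · intro u v h
    rw [hE] at h
    simp only [Set.mem_iUnion] at h
    obtain ⟨p, hp, h⟩ := h
    obtain ⟨m, f, h0, hm, hs, hl, hpV, hpE⟩ := hP p hp
    rw [hpE] at h
    obtain ⟨i, hi, h⟩ := h
    obtain ⟨rfl, rfl⟩ := Prod.mk.inj h
    refine ⟨hs i hi, ?_, ?_⟩
    · rw [hV]; simp only [Set.mem_iUnion]; exact ⟨p, hp, by rw [hpV]; exact ⟨i, hi.le, rfl⟩⟩
    · rw [hV]; simp only [Set.mem_iUnion]; exact ⟨p, hp, by rw [hpV]; exact ⟨i + 1, hi, rfl⟩⟩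
  · intro a b hv
    obtain ⟨m, f, i, hi, hvi, h0, hm, hs, hl, hE'⟩ := key _ hv
    cases i with
    | zero => left; rw [hvi, h0]
    | succ i =>
      right
      have e := hE' i hi
      rw [← hvi] at e
      rcases hs i hi with h | h
      · left
        rw [← hvi] at h
        have h1 := congrArg Prod.fst h
        have h2 := congrArg Prod.snd h
        simp only at h1 h2
        refine ⟨by omega, ?_⟩
        convert e using 2
        ext <;> simp <;> omega
      · right
        rw [← hvi] at h
        have h1 := congrArg Prod.fst h
        have h2 := congrArg Prod.snd h
        simp only at h1 h2
        refine ⟨by omega, ?_⟩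
        convert e using 2
        ext <;> simp <;> omega
  · intro a b hv
    obtain ⟨m, f, i, hi, hvi, h0, hm, hs, hl, hE'⟩ := key _ hv
    rcases hi.lt_or_eq with hi | hi
    · right
      have e := hE' i hi
      rcases hs i hi with h | h
      · rw [h, ← hvi] at e; left; exact e
      · rw [h, ← hvi] at e; right; exact e
    · left; rw [hvi, hi]; exact hm
  · intro a b hv
    obtain ⟨m, f, i, hi, hvi, h0, hm, hs, hl, hE'⟩ := key _ hv
    obtain ⟨t, ht, h⟩ := hl i hi
    rw [← hvi] at h
    have := term_sum ht
    simp only at h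
    omega

/-- a directed path with edges in `E` ending in `T`. -/
def EPath (T : Set (ℕ × ℕ)) (E : Set ((ℕ × ℕ) × (ℕ × ℕ))) (m : ℕ) (f : ℕ → ℕ × ℕ) : Prop :=
  f m ∈ T ∧ ∀ i < m, (f i, f (i + 1)) ∈ E

lemma EPath.cons {T E m f} (h : EPath T E m f) {u} (hu : (u, f 0) ∈ E) :
    EPath T E (m + 1) (fun i => Nat.casesOn i u f) := by
  refine ⟨h.1, ?_⟩
  intro i hi
  cases i with
  | zero => exact hu
  | succ i => exact h.2 i (by omega)

lemma fwd {n T γ} (h : GoodFace n T γ) : ∀ N a b, (a, b) ∈ γ.V → n - (a + b) = N →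
    ∃ m f, EPath T γ.E m f ∧ f 0 = (a, b) := by
  intro N
  induction N using Nat.strong_induction_on with
  | _ N ih =>
    intro a b hv hN
    rcases h.out a b hv with ht | he | he
    · exact ⟨0, fun _ => (a, b), ⟨ht, by simp⟩, rfl⟩
    · have hV := (h.edge _ _ he).2.2
      have := h.bd _ _ hV
      obtain ⟨m, f, hf, h0⟩ := ih (n - (a + 1 + b)) (by omega) (a + 1) b hV rfl
      exact ⟨_, _, hf.cons (u := (a, b)) (by rw [h0]; exact he), rfl⟩
    · have hV := (h.edge _ _ he).2.2
      have := h.bd _ _ hV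
      obtain ⟨m, f, hf, h0⟩ := ih (n - (a + (b + 1))) (by omega) a (b + 1) hV rfl
      exact ⟨_, _, hf.cons (u := (a, b)) (by rw [h0]; exact he), rfl⟩

lemma bwd {n T γ} (h : GoodFace n T γ) : ∀ N m g a b, (a, b) ∈ γ.V → a + b = N →
    EPath T γ.E m g → g 0 = (a, b) →
    ∃ f, EPath T γ.E (m + N) f ∧ f 0 = (0, 0) ∧ ∀ i, f (i + N) = g i := by
  intro N
  induction N with
  | zero =>
    intro m g a b hv hN hg h0
    exact ⟨g, hg, by rw [h0]; ext <;> simp <;> omega, fun i => rfl⟩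
  | succ N ih =>
    intro m g a b hv hN hg h0
    rcases h.inn a b hv with hz | ⟨h1, he⟩ | ⟨h1, he⟩
    · simp at hz; omega
    · have hV := (h.edge _ _ he).2.1
      obtain ⟨f, hf, hf0, hfi⟩ := ih (m + 1) _ (a - 1) b hV (by omega)
        (hg.cons (u := (a - 1, b)) (by rw [h0]; exact he)) rfl
      refine ⟨f, by convert hf using 1; omega, hf0, fun i => ?_⟩
      have := hfi (i + 1)
      rw [show i + (N + 1) = i + 1 + N by omega, this]
    · have hV := (h.edge _ _ he).2.1
      obtain ⟨f, hf, hf0, hfi⟩ := ih (m + 1) _ a (b - 1) hV (by omega)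
        (hg.cons (u := (a, b - 1)) (by rw [h0]; exact he)) rfl
      refine ⟨f, by convert hf using 1; omega, hf0, fun i => ?_⟩
      have := hfi (i + 1)
      rw [show i + (N + 1) = i + 1 + N by omega, this]

lemma path_of {s : ℕ} {k : ℕ → ℕ} {γ : LGraph}
    (h : GoodFace (nseq k s) (terminals s k) γ) {m f}
    (hf : EPath (terminals s k) γ.E m f) (h0 : f 0 = (0, 0)) :
    IsPositivePath s k ⟨{v | ∃ i ≤ m, v = f i}, {e | ∃ i < m, e = (f i, f (i + 1))}⟩ := by
  refine ⟨m, f, h0, hf.1, fun i hi => (h.edge _ _ (hf.2 i hi)).1, ?_, rfl, rfl⟩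
  have : ∀ d i, i + d = m → (f i).1 ≤ (f m).1 ∧ (f i).2 ≤ (f m).2 := by
    intro d
    induction d with
    | zero => intro i hi; simp at hi; subst hi; simp
    | succ d ih =>
      intro i hi
      have := ih (i + 1) (by omega)
      rcases (h.edge _ _ (hf.2 i (by omega))).1 with e | e <;> rw [e] at this <;> simp at this <;>
        omega
  intro i hi
  exact ⟨f m, hf.1, this (m - i) i (by omega)⟩

lemma face_of_good {s : ℕ} {k : ℕ → ℕ} {γ : LGraph}
    (h : GoodFace (nseq k s) (terminals s k) γ) : IsLadderFace s k γ := by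
  have hVm : ∀ m f, EPath (terminals s k) γ.E m f → ∀ i ≤ m, f i ∈ γ.V := by
    intro m f hf i hi
    rcases hi.lt_or_eq with hi | rfl
    · exact (h.edge _ _ (hf.2 i hi)).2.1
    · exact h.term hf.1
  refine ⟨h.term, {p | IsPositivePath s k p ∧ p ≤ γ}, fun p hp => hp.1, ?_, ?_⟩
  · apply subset_antisymm
    · rintro ⟨a, b⟩ hv
      obtain ⟨m, g, hg, hg0⟩ := fwd h _ a b hv rfl
      obtain ⟨f, hf, hf0, hfi⟩ := bwd h _ m g a b hv rfl hg hg0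
      simp only [Set.mem_iUnion]
      refine ⟨_, ⟨path_of h hf hf0, ?_, ?_⟩, ?_⟩
      · rintro _ ⟨i, hi, rfl⟩; exact hVm _ _ hf i hi
      · rintro _ ⟨i, hi, rfl⟩; exact hf.2 i hi
      · exact ⟨a + b, by omega, by rw [← hg0, ← hfi 0]; simp⟩
    · intro v hv
      simp only [Set.mem_iUnion] at hv
      obtain ⟨p, hp, hv⟩ := hv
      exact hp.2.1 hv
  · apply subset_antisymm
    · rintro ⟨⟨a, b⟩, ⟨c, d⟩⟩ he
      obtain ⟨-, hu, hv⟩ := h.edge _ _ he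
      obtain ⟨m, g, hg, hg0⟩ := fwd h _ c d hv rfl
      obtain ⟨f, hf, hf0, hfi⟩ := bwd h _ (m + 1) _ a b hu rfl
        (hg.cons (u := (a, b)) (by rw [hg0]; exact he)) rfl
      simp only [Set.mem_iUnion]
      refine ⟨_, ⟨path_of h hf hf0, ?_, ?_⟩, ?_⟩
      · rintro _ ⟨i, hi, rfl⟩; exact hVm _ _ hf i hi
      · rintro _ ⟨i, hi, rfl⟩; exact hf.2 i hi
      · refine ⟨a + b, by omega, ?_⟩
        have e1 := hfi 0
        have e2 := hfi 1
        simp only [zero_add] at e1 e2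
        rw [add_comm 1] at e2
        rw [e1, e2]
        change _ = ((a, b), g 0)
        rw [hg0]
    · intro v hv
      simp only [Set.mem_iUnion] at hv
      obtain ⟨p, hp, hv⟩ := hv
      exact hp.2.2 hv

lemma mem_idx {n i j : ℕ} : (i, j) ∈ GCIdx n ↔ 1 ≤ i ∧ 1 ≤ j ∧ i + j ≤ n := Iff.rfl

lemma phiE_hor {n lam F i j} (h : (i, j) ∈ GCIdx n) :
    ((i - 1, j), (i, j)) ∈ phiE n lam F ↔
      ∃ x ∈ F, gcEntry n lam x (i, j) < gcEntry n lam x (i, j + 1) := by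
  have h' := mem_idx.1 h
  constructor
  · rintro (⟨a, ha, e | e⟩ | ⟨a, b, hab, e, hx⟩ | ⟨a, b, hab, e, hx⟩)
    · simp at e; omega
    · simp at e; omega
    · simp only [Prod.mk.injEq] at e
      obtain ⟨-, rfl, rfl⟩ := e
      exact hx
    · have := mem_idx.1 hab
      simp at e; omega
  · intro hx
    exact Or.inr (Or.inl ⟨i, j, h, rfl, hx⟩)

lemma phiE_ver {n lam F i j} (h : (i, j) ∈ GCIdx n) :
    ((i, j - 1), (i, j)) ∈ phiE n lam F ↔
      ∃ x ∈ F, gcEntry n lam x (i + 1, j) < gcEntry n lam x (i, j) := by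
  have h' := mem_idx.1 h
  constructor
  · rintro (⟨a, ha, e | e⟩ | ⟨a, b, hab, e, hx⟩ | ⟨a, b, hab, e, hx⟩)
    · simp at e; omega
    · simp at e; omega
    · have := mem_idx.1 hab
      simp at e; omega
    · simp only [Prod.mk.injEq] at e
      obtain ⟨-, rfl, rfl⟩ := e
      exact hx
  · intro hx
    exact Or.inr (Or.inr ⟨i, j, h, rfl, hx⟩)

lemma phi_mono {n lam F F'} (h : F ⊆ F') : phiGC n lam F ≤ phiGC n lam F' := by
  have : phiE n lam F ⊆ phiE n lam F' := by
    rintro e (h1 | ⟨i, j, hi, he, x, hx, hl⟩ | ⟨i, j, hi, he, x, hx, hl⟩)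
    · exact Or.inl h1
    · exact Or.inr (Or.inl ⟨i, j, hi, he, x, h hx, hl⟩)
    · exact Or.inr (Or.inr ⟨i, j, hi, he, x, h hx, hl⟩)
  refine ⟨?_, this⟩
  rintro v ⟨e, he, hv⟩
  exact ⟨e, this he, hv⟩

lemma phi_refl {n lam F F'} (hF : IsGCFace n lam F) (hF' : IsGCFace n lam F')
    (h : phiGC n lam F ≤ phiGC n lam F') : F ⊆ F' := by
  obtain ⟨-, SH, SV, hSH, hSV, rfl⟩ := hF
  obtain ⟨-, SH', SV', hSH', hSV', rfl⟩ := hF'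
  intro x hx
  refine ⟨hx.1, ?_, ?_⟩
  · rintro ⟨i, j⟩ hp
    have hi := hSH' hp
    by_contra hne
    have hlt := lt_of_le_of_ne (hx.1 i j hi).1 (Ne.symm hne)
    obtain ⟨y, hy, hlt'⟩ := (phiE_hor hi).1 (h.2 ((phiE_hor hi).2 ⟨x, hx, hlt⟩))
    exact absurd (hy.2.1 _ hp) hlt'.ne'
  · rintro ⟨i, j⟩ hp
    have hi := hSV' hp
    by_contra hne
    have hlt := lt_of_le_of_ne (hx.1 i j hi).2 (Ne.symm hne)
    obtain ⟨y, hy, hlt'⟩ := (phiE_ver hi).1 (h.2 ((phiE_ver hi).2 ⟨x, hx, hlt⟩))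
    exact absurd (hy.2.2 _ hp) hlt'.ne'

lemma gcEntry_out {n lam x i j} (h : i + j = n + 1) : gcEntry n lam x (i, j) = lam i := by
  rw [gcEntry, dif_neg]
  intro hh
  have := mem_idx.1 hh
  omega

/-- The abstract data on `n`, `T`, `lam` used in the proof. -/
structure Setup (n : ℕ) (T : Set (ℕ × ℕ)) (lam : ℕ → ℝ) : Prop where
  pos : 1 ≤ n
  tsum : ∀ a b, (a, b) ∈ T → a + b = n
  left : (0, n) ∈ T
  right : (n, 0) ∈ T
  le : ∀ i j, 1 ≤ i → 1 ≤ j → i + j = n → lam (i + 1) ≤ lam i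
  lt : ∀ i j, 1 ≤ i → 1 ≤ j → i + j = n → (lam (i + 1) < lam i ↔ (i, j) ∈ T)

/-- Vertex characterisation for phi. -/
lemma phi_in {n T lam F} (S : Setup n T lam) (hF : F ⊆ GCPoly n lam) {a b : ℕ}
    (hv : (a, b) ∈ (phiGC n lam F).V) (h : (a, b) ∈ GCIdx n) :
    ∃ x ∈ F, gcEntry n lam x (a + 1, b) < gcEntry n lam x (a, b + 1) := by
  have h' := mem_idx.1 h
  obtain ⟨e, (⟨i, hi, rfl | rfl⟩ | ⟨i, j, hi, rfl, x, hx, hl⟩ | ⟨i, j, hi, rfl, x, hx, hl⟩),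
    hv | hv⟩ := hv
  · simp at hv; omega
  · simp at hv; omega
  · simp at hv; omega
  · simp at hv; omega
  · have hij := mem_idx.1 hi
    simp at hv
    obtain ⟨h1, rfl⟩ := hv
    obtain rfl : i = a + 1 := by omega
    refine ⟨x, hx, hl.trans_le ?_⟩
    exact (hF hx a (b + 1) (mem_idx.2 (by omega))).2
  · simp at hv
    obtain ⟨rfl, rfl⟩ := hv
    exact ⟨x, hx, (hF hx a b h).2.trans_lt hl⟩
  · have hij := mem_idx.1 hi
    simp at hv
    obtain ⟨rfl, h1⟩ := hv
    obtain rfl : j = b + 1 := by omega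
    refine ⟨x, hx, lt_of_le_of_lt ?_ hl⟩
    exact (hF hx (a + 1) b (mem_idx.2 (by omega))).1
  · simp at hv
    obtain ⟨rfl, rfl⟩ := hv
    exact ⟨x, hx, hl.trans_le (hF hx a b h).1⟩

lemma phi_edge_in {n T lam F} (S : Setup n T lam) {a b : ℕ} (h : (a, b) ∈ GCIdx n)
    {x} (hx : x ∈ F) (hl : gcEntry n lam x (a + 1, b) < gcEntry n lam x (a, b + 1)) :
    ((a - 1, b), (a, b)) ∈ phiE n lam F ∨ ((a, b - 1), (a, b)) ∈ phiE n lam F := by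
  rcases lt_or_ge (gcEntry n lam x (a, b)) (gcEntry n lam x (a, b + 1)) with h1 | h1
  · exact Or.inl ((phiE_hor h).2 ⟨x, hx, h1⟩)
  · exact Or.inr ((phiE_ver h).2 ⟨x, hx, hl.trans_le h1⟩)

lemma phi_good {n T lam F} (S : Setup n T lam) (hF : F ⊆ GCPoly n lam) (hne : F.Nonempty) :
    GoodFace n T (phiGC n lam F) := by
  have hbd : ∀ e ∈ phiE n lam F, gridStep e.1 e.2 ∧ e.2.1 + e.2.2 ≤ n := by
    rintro e (⟨i, hi, rfl | rfl⟩ | ⟨i, j, hi, rfl, -⟩ | ⟨i, j, hi, rfl, -⟩)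
    · exact ⟨Or.inr rfl, by simp; omega⟩
    · exact ⟨Or.inl rfl, by simp; omega⟩
    · have := mem_idx.1 hi
      exact ⟨Or.inl (by ext <;> simp; omega), this.2.2⟩
    · have := mem_idx.1 hi
      exact ⟨Or.inr (by ext <;> simp; omega), this.2.2⟩
  have hbdV : ∀ a b, (a, b) ∈ (phiGC n lam F).V → a + b ≤ n := by
    rintro a b ⟨e, he, hv | hv⟩
    · obtain ⟨h1 | h1, h2⟩ := hbd e he <;> rw [← hv] at h1 <;> rw [h1] at h2 <;> simp at h2 <;> omega
    · have := (hbd e he).2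
      rw [← hv] at this; exact this
  have hl : ∀ i < n, ((0, i), (0, i + 1)) ∈ phiE n lam F := fun i hi => Or.inl ⟨i, hi, Or.inl rfl⟩
  have hr : ∀ i < n, ((i, 0), (i + 1, 0)) ∈ phiE n lam F := fun i hi => Or.inl ⟨i, hi, Or.inr rfl⟩
  have hn := S.pos
  refine ⟨?_, ?_, ?_, ?_, hbdV⟩
  · rintro ⟨a, b⟩ hv
    have hs := S.tsum a b hv
    rcases Nat.eq_zero_or_pos a with rfl | ha
    · refine ⟨_, hl (n - 1) (by omega), Or.inr ?_⟩
      ext <;> simp; omega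
    rcases Nat.eq_zero_or_pos b with rfl | hb
    · refine ⟨_, hr (n - 1) (by omega), Or.inr ?_⟩
      ext <;> simp; omega
    obtain ⟨x, hx⟩ := hne
    have hlt := (S.lt a b ha hb hs).2 hv
    rcases phi_edge_in S (F := F) (a := a) (b := b) (mem_idx.2 (by omega)) hx
      (by rwa [gcEntry_out (by omega), gcEntry_out (by omega)]) with h | h
    · exact ⟨_, h, Or.inr rfl⟩
    · exact ⟨_, h, Or.inr rfl⟩
  · intro u v h
    exact ⟨(hbd _ h).1, ⟨_, h, Or.inl rfl⟩, ⟨_, h, Or.inr rfl⟩⟩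
  · intro a b hv
    have hb' := hbdV a b hv
    rcases Nat.eq_zero_or_pos a with rfl | ha
    · rcases Nat.eq_zero_or_pos b with rfl | hb
      · left; rfl
      · right; right
        refine ⟨hb, ?_⟩
        have := hl (b - 1) (by omega)
        rwa [Nat.sub_add_cancel hb] at this
    rcases Nat.eq_zero_or_pos b with rfl | hb
    · right; left
      refine ⟨ha, ?_⟩
      have := hr (a - 1) (by omega)
      rwa [Nat.sub_add_cancel ha] at this
    have hi : (a, b) ∈ GCIdx n := ⟨ha, hb, hb'⟩
    obtain ⟨x, hx, hlt⟩ := phi_in S hF hv hi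
    rcases phi_edge_in S hi hx hlt with h | h
    · exact Or.inr (Or.inl ⟨ha, h⟩)
    · exact Or.inr (Or.inr ⟨hb, h⟩)
  · intro a b hv
    have hb' := hbdV a b hv
    rcases Nat.eq_zero_or_pos a with rfl | ha
    · rcases hb'.lt_or_eq with h | h
      · exact Or.inr (Or.inr (hl b (by omega)))
      · left; rw [show b = n by omega]; exact S.left
    rcases Nat.eq_zero_or_pos b with rfl | hb
    · rcases hb'.lt_or_eq with h | h
      · exact Or.inr (Or.inl (hr a (by omega)))
      · left; rw [show a = n by omega]; exact S.right
    have hi : (a, b) ∈ GCIdx n := ⟨ha, hb, hb'⟩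
    obtain ⟨x, hx, hlt⟩ := phi_in S hF hv hi
    rcases hb'.lt_or_eq with h | h
    · right
      rcases lt_or_ge (gcEntry n lam x (a + 1, b)) (gcEntry n lam x (a + 1, b + 1)) with h1 | h1
      · left
        exact (phiE_hor (i := a + 1) (j := b) (mem_idx.2 (by omega))).2 ⟨x, hx, h1⟩
      · right
        exact (phiE_ver (i := a) (j := b + 1) (mem_idx.2 (by omega))).2 ⟨x, hx, h1.trans_lt hlt⟩
    · left
      rw [gcEntry_out (by omega), gcEntry_out (by omega)] at hlt
      exact (S.lt a b ha hb h).1 hlt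

/-- Generic recursion. -/
def genX (n : ℕ) (lam : ℕ → ℝ) (E : Set ((ℕ × ℕ) × (ℕ × ℕ))) (c : ℕ × ℕ → ℝ → ℝ → ℝ) :
    ℕ → ℕ → ℝ
  | i, j =>
    if h1 : n + 1 ≤ i + j then lam i
    else if h2 : ((i - 1, j), (i, j)) ∈ E then
      if h3 : ((i, j - 1), (i, j)) ∈ E then
        c (i, j) (genX n lam E c i (j + 1)) (genX n lam E c (i + 1) j)
      else genX n lam E c (i + 1) j
    else genX n lam E c i (j + 1)
  termination_by i j => n + 1 - (i + j)
  decreasing_by all_goals omega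

/-- `genX` as a point. -/
def genP (n : ℕ) (lam : ℕ → ℝ) (E : Set ((ℕ × ℕ) × (ℕ × ℕ))) (c : ℕ × ℕ → ℝ → ℝ → ℝ) :
    GCIdx n → ℝ := fun p => genX n lam E c p.1.1 p.1.2

lemma genP_entry {n lam E c i j} (h1 : 1 ≤ i) (h2 : 1 ≤ j) (h3 : i + j ≤ n + 1) :
    gcEntry n lam (genP n lam E c) (i, j) = genX n lam E c i j := by
  rcases Nat.lt_or_ge n (i + j) with h | h
  · rw [gcEntry_out (by omega), genX, dif_pos (by omega)]
  · rw [gcEntry, dif_pos (mem_idx.2 ⟨h1, h2, h⟩)]; rfl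

lemma bdry_left {n T lam γ} (S : Setup n T lam) (h : GoodFace n T γ) :
    ∀ d i, i + d = n → (0, i) ∈ γ.V ∧ (1 ≤ i → ((0, i - 1), (0, i)) ∈ γ.E) := by
  have key : ∀ i, (0, i) ∈ γ.V → 1 ≤ i → ((0, i - 1), (0, i)) ∈ γ.E := by
    intro i hi h1
    rcases h.inn _ _ hi with h2 | h2 | h2
    · simp at h2; omega
    · omega
    · exact h2.2
  intro d
  induction d with
  | zero => intro i hi; obtain rfl : i = n := by omega
            exact ⟨h.term S.left, key _ (h.term S.left)⟩
  | succ d ih =>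
    intro i hi
    have := (h.edge _ _ ((ih (i + 1) (by omega)).2 (by omega))).2.1
    exact ⟨this, key _ this⟩

lemma bdry_right {n T lam γ} (S : Setup n T lam) (h : GoodFace n T γ) :
    ∀ d i, i + d = n → (i, 0) ∈ γ.V ∧ (1 ≤ i → ((i - 1, 0), (i, 0)) ∈ γ.E) := by
  have key : ∀ i, (i, 0) ∈ γ.V → 1 ≤ i → ((i - 1, 0), (i, 0)) ∈ γ.E := by
    intro i hi h1
    rcases h.inn _ _ hi with h2 | h2 | h2
    · simp at h2; omega
    · exact h2.2
    · omega
  intro d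
  induction d with
  | zero => intro i hi; obtain rfl : i = n := by omega
            exact ⟨h.term S.right, key _ (h.term S.right)⟩
  | succ d ih =>
    intro i hi
    have := (h.edge _ _ ((ih (i + 1) (by omega)).2 (by omega))).2.1
    exact ⟨this, key _ this⟩

/-- The generic point: strict exactly at the edges. -/
lemma gen_strict {n T lam γ} (S : Setup n T lam) (h : GoodFace n T γ) :
    ∀ d i j, 1 ≤ i → 1 ≤ j → i + j + d = n →
      let X := genX n lam γ.E (fun _ u r => (u + r) / 2)
      (X i j ≤ X i (j + 1) ∧ (X i j < X i (j + 1) ↔ ((i - 1, j), (i, j)) ∈ γ.E)) ∧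
      (X (i + 1) j ≤ X i j ∧ (X (i + 1) j < X i j ↔ ((i, j - 1), (i, j)) ∈ γ.E)) := by
  intro d
  induction d with
  | zero => ?_
  | succ d ih => ?_
  all_goals
    intro i j hi hj hd X
    have P : X (i + 1) j ≤ X i (j + 1) ∧ (X (i + 1) j < X i (j + 1) ↔ (i, j) ∈ γ.V) := by
      first
      | have e1 : X (i + 1) j = lam (i + 1) := by
          simp only [X]; rw [genX, dif_pos (by omega)]
        have e2 : X i (j + 1) = lam i := by
          simp only [X]; rw [genX, dif_pos (by omega)]
        rw [e1, e2]
        refine ⟨S.le i j hi hj (by omega), ?_⟩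
        rw [S.lt i j hi hj (by omega)]
        refine ⟨fun hh => h.term hh, fun hh => ?_⟩
        rcases h.out _ _ hh with h1 | h1 | h1
        · exact h1
        · have := h.bd _ _ (h.edge _ _ h1).2.2; omega
        · have := h.bd _ _ (h.edge _ _ h1).2.2; omega
      | have A := (ih i (j + 1) hi (by omega) (by omega)).2
        have B := (ih (i + 1) j (by omega) hj (by omega)).1
        simp only [Nat.add_sub_cancel] at A B
        change X (i + 1) (j + 1) ≤ X i (j + 1) ∧ (X (i + 1) (j + 1) < X i (j + 1) ↔ _) at A
        change X (i + 1) j ≤ X (i + 1) (j + 1) ∧ (X (i + 1) j < X (i + 1) (j + 1) ↔ _) at B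
        refine ⟨B.1.trans A.1, ?_⟩
        constructor
        · intro hlt
          rcases A.1.lt_or_eq with hA | hA
          · exact (h.edge _ _ (A.2.1 hA)).2.1
          · rw [← hA] at hlt
            exact (h.edge _ _ (B.2.1 hlt)).2.1
        · intro hv
          rcases h.out _ _ hv with h1 | h1 | h1
          · have := S.tsum _ _ h1; omega
          · exact (B.2.2 h1).trans_le A.1
          · exact B.1.trans_lt (A.2.2 h1)
    have eX : X i j = if ((i - 1, j), (i, j)) ∈ γ.E then
        if ((i, j - 1), (i, j)) ∈ γ.E then (X i (j + 1) + X (i + 1) j) / 2 else X (i + 1) j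
        else X i (j + 1) := by
      simp only [X]; rw [genX, dif_neg (by omega)]; rfl
    by_cases h1 : ((i - 1, j), (i, j)) ∈ γ.E
    · have hlt := P.2.2 (h.edge _ _ h1).2.2
      by_cases h2 : ((i, j - 1), (i, j)) ∈ γ.E
      · rw [if_pos h1, if_pos h2] at eX
        simp only [h1, h2, iff_true]
        refine ⟨⟨?_, ?_⟩, ?_, ?_⟩ <;> linarith
      · rw [if_pos h1, if_neg h2] at eX
        simp only [h1, h2, iff_true, iff_false]
        refine ⟨⟨?_, ?_⟩, ?_, ?_⟩ <;> linarith
    · rw [if_neg h1] at eX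
      by_cases h2 : ((i, j - 1), (i, j)) ∈ γ.E
      · have hlt := P.2.2 (h.edge _ _ h2).2.2
        simp only [h1, h2, iff_true, iff_false]
        refine ⟨⟨?_, ?_⟩, ?_, ?_⟩ <;> linarith
      · have hv : (i, j) ∉ γ.V := by
          intro hv
          rcases h.inn _ _ hv with h3 | h3 | h3
          · simp at h3; omega
          · exact h1 h3.2
          · exact h2 h3.2
        have hnl := not_lt.1 fun hh => hv (P.2.1 hh)
        simp only [h1, h2, iff_false]
        refine ⟨⟨?_, ?_⟩, ?_, ?_⟩ <;> linarith

lemma exists_generic {n T lam γ} (S : Setup n T lam) (h : GoodFace n T γ) :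
    ∃ x ∈ GCPoly n lam, ∀ i j, (i, j) ∈ GCIdx n →
      (gcEntry n lam x (i, j) < gcEntry n lam x (i, j + 1) ↔ ((i - 1, j), (i, j)) ∈ γ.E) ∧
      (gcEntry n lam x (i + 1, j) < gcEntry n lam x (i, j) ↔ ((i, j - 1), (i, j)) ∈ γ.E) := by
  have key := gen_strict S h
  refine ⟨genP n lam γ.E (fun _ u r => (u + r) / 2), ?_, ?_⟩
  · intro i j hij
    obtain ⟨h1, h2, h3⟩ := mem_idx.1 hij
    rw [genP_entry (by omega) (by omega) (by omega), genP_entry (by omega) (by omega) (by omega),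
      genP_entry (by omega) (by omega) (by omega)]
    obtain ⟨⟨a, b⟩, c, d⟩ := key (n - (i + j)) i j h1 h2 (by omega)
    exact ⟨a, c⟩
  · intro i j hij
    obtain ⟨h1, h2, h3⟩ := mem_idx.1 hij
    rw [genP_entry (by omega) (by omega) (by omega), genP_entry (by omega) (by omega) (by omega),
      genP_entry (by omega) (by omega) (by omega)]
    obtain ⟨⟨a, b⟩, c, d⟩ := key (n - (i + j)) i j h1 h2 (by omega)
    exact ⟨b, d⟩

lemma psi_generic {n lam γ x} (hx : x ∈ GCPoly n lam) (hs : ∀ i j, (i, j) ∈ GCIdx n →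
      (gcEntry n lam x (i, j) < gcEntry n lam x (i, j + 1) ↔ ((i - 1, j), (i, j)) ∈ γ.E) ∧
      (gcEntry n lam x (i + 1, j) < gcEntry n lam x (i, j) ↔ ((i, j - 1), (i, j)) ∈ γ.E)) :
    x ∈ psiGC n lam γ := by
  refine ⟨hx, fun i j hij => ⟨fun hh => ?_, fun hh => ?_⟩⟩
  · exact le_antisymm (hx i j hij).1 (not_lt.1 fun h => hh ((hs i j hij).1.1 h))
  · exact le_antisymm (not_lt.1 fun h => hh ((hs i j hij).2.1 h)) (hx i j hij).2

lemma psi_face {n T lam γ} (S : Setup n T lam) (h : GoodFace n T γ) :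
    IsGCFace n lam (psiGC n lam γ) := by
  obtain ⟨x, hx, hs⟩ := exists_generic S h
  refine ⟨⟨x, psi_generic hx hs⟩, {p | p ∈ GCIdx n ∧ ((p.1 - 1, p.2), (p.1, p.2)) ∉ γ.E},
    {p | p ∈ GCIdx n ∧ ((p.1, p.2 - 1), (p.1, p.2)) ∉ γ.E}, fun p hp => hp.1, fun p hp => hp.1, ?_⟩
  ext y
  constructor
  · rintro ⟨hy, hy'⟩
    exact ⟨hy, fun p hp => ((hy' p.1 p.2 hp.1).1 hp.2).symm, fun p hp => (hy' p.1 p.2 hp.1).2 hp.2⟩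
  · rintro ⟨hy, h1, h2⟩
    exact ⟨hy, fun i j hij => ⟨fun hh => (h1 (i, j) ⟨hij, hh⟩).symm, fun hh => h2 (i, j) ⟨hij, hh⟩⟩⟩

lemma phi_psi {n T lam γ} (S : Setup n T lam) (h : GoodFace n T γ) :
    phiGC n lam (psiGC n lam γ) = γ := by
  obtain ⟨x, hx, hs⟩ := exists_generic S h
  have hx' := psi_generic hx hs
  have hn := S.pos
  have hE : phiE n lam (psiGC n lam γ) = γ.E := by
    apply subset_antisymm
    · rintro e (⟨i, hi, rfl | rfl⟩ | ⟨i, j, hi, rfl, y, hy, hl⟩ | ⟨i, j, hi, rfl, y, hy, hl⟩)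
      · exact (bdry_left S h (n - (i + 1)) (i + 1) (by omega)).2 (by omega)
      · exact (bdry_right S h (n - (i + 1)) (i + 1) (by omega)).2 (by omega)
      · by_contra hh
        exact hl.ne ((hy.2 i j hi).1 hh)
      · by_contra hh
        exact hl.ne' ((hy.2 i j hi).2 hh)
    · rintro ⟨⟨a, b⟩, ⟨c, d⟩⟩ he
      obtain ⟨hg, hu, hv⟩ := h.edge _ _ he
      have hb := h.bd _ _ hv
      rcases hg with hg | hg
      · simp at hg
        obtain ⟨rfl, rfl⟩ := hg
        rcases Nat.eq_zero_or_pos d with rfl | hd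
        · exact Or.inl ⟨a, by omega, Or.inr rfl⟩
        · have hi : (a + 1, d) ∈ GCIdx n := mem_idx.2 (by omega)
          exact (phiE_hor hi).2 ⟨x, hx', (hs _ _ hi).1.2 he⟩
      · simp at hg
        obtain ⟨rfl, rfl⟩ := hg
        rcases Nat.eq_zero_or_pos c with rfl | hd
        · exact Or.inl ⟨b, by omega, Or.inl rfl⟩
        · have hi : (c, b + 1) ∈ GCIdx n := mem_idx.2 (by omega)
          exact (phiE_ver hi).2 ⟨x, hx', (hs _ _ hi).2.2 he⟩
  apply LGraph.ext
  · change {v | ∃ e ∈ phiE n lam (psiGC n lam γ), v = e.1 ∨ v = e.2} = γ.V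
    rw [hE]
    apply subset_antisymm
    · rintro v ⟨⟨u, w⟩, he, rfl | rfl⟩
      · exact (h.edge _ _ he).2.1
      · exact (h.edge _ _ he).2.2
    · rintro ⟨a, b⟩ hv
      rcases h.inn a b hv with h1 | h1 | h1
      · have := (bdry_left S h (n - 1) 1 (by omega)).2 le_rfl
        exact ⟨_, this, Or.inl h1⟩
      · exact ⟨_, h1.2, Or.inr rfl⟩
      · exact ⟨_, h1.2, Or.inr rfl⟩
  · exact hE

instance idxFinite (n : ℕ) : Finite (GCIdx n) := by
  apply Set.Finite.to_subtype
  apply (Set.finite_Iic (n, n)).subset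
  rintro ⟨i, j⟩ h
  have := mem_idx.1 h
  exact ⟨by simp; omega, by simp; omega⟩

lemma gcEntry_add (n lam x y p) :
    gcEntry n lam (x + y) p = gcEntry n lam x p + gcEntry n 0 y p := by
  unfold gcEntry; split_ifs <;> simp

lemma gcEntry_sub (n lam x y p) :
    gcEntry n 0 (x - y) p = gcEntry n lam x p - gcEntry n lam y p := by
  unfold gcEntry; split_ifs <;> simp

lemma gcEntry_smul (n) (c : ℝ) (y p) :
    gcEntry n 0 (c • y) p = c * gcEntry n 0 y p := by
  unfold gcEntry; split_ifs <;> simp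

lemma gcEntry_zero (n p) : gcEntry n 0 0 p = 0 := by
  unfold gcEntry; split_ifs <;> simp

/-- The direction space. -/
def dirW (n : ℕ) (E : Set ((ℕ × ℕ) × (ℕ × ℕ))) : Submodule ℝ (GCIdx n → ℝ) where
  carrier := {y | ∀ i j : ℕ, (i, j) ∈ GCIdx n →
    (((i - 1, j), (i, j)) ∉ E → gcEntry n 0 y (i, j) = gcEntry n 0 y (i, j + 1)) ∧
    (((i, j - 1), (i, j)) ∉ E → gcEntry n 0 y (i, j) = gcEntry n 0 y (i + 1, j))}
  add_mem' := by
    intro x y hx hy i j hij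
    simp only [gcEntry_add]
    exact ⟨fun h => by rw [(hx i j hij).1 h, (hy i j hij).1 h],
      fun h => by rw [(hx i j hij).2 h, (hy i j hij).2 h]⟩
  zero_mem' := by
    intro i j hij
    simp only [gcEntry_zero, implies_true, and_self]
  smul_mem' := by
    intro c x hx i j hij
    simp only [gcEntry_smul]
    exact ⟨fun h => by rw [(hx i j hij).1 h], fun h => by rw [(hx i j hij).2 h]⟩

lemma dir_eq {n T lam γ} (S : Setup n T lam) (h : GoodFace n T γ) :
    (affineSpan ℝ (psiGC n lam γ)).direction = dirW n γ.E := by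
  rw [direction_affineSpan]
  apply le_antisymm
  · rw [vectorSpan_def, Submodule.span_le]
    rintro _ ⟨x, hx, y, hy, rfl⟩
    intro i j hij
    simp only [vsub_eq_sub, gcEntry_sub n lam]
    exact ⟨fun h => by rw [(hx.2 i j hij).1 h, (hy.2 i j hij).1 h],
      fun h => by rw [(hx.2 i j hij).2 h, (hy.2 i j hij).2 h]⟩
  · intro w hw
    obtain ⟨x, hx, hs⟩ := exists_generic S h
    have hx' := psi_generic hx hs
    have ev : ∀ A B a b : ℝ, A < B → ∀ᶠ ε in nhdsWithin (0 : ℝ) (Set.Ioi 0),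
        A + ε * a ≤ B + ε * b := by
      intro A B a b hAB
      apply Filter.Eventually.filter_mono nhdsWithin_le_nhds
      have c1 : Continuous fun ε : ℝ => A + ε * a := by fun_prop
      have c2 : Continuous fun ε : ℝ => B + ε * b := by fun_prop
      have := (isOpen_lt c1 c2).mem_nhds (show (0 : ℝ) ∈ _ by simpa using hAB)
      filter_upwards [this] with ε hε using le_of_lt hε
    have ev2 : ∀ᶠ ε in nhdsWithin (0 : ℝ) (Set.Ioi 0), ∀ p : GCIdx n,
        gcEntry n lam (x + ε • w) (p.1.1, p.1.2) ≤ gcEntry n lam (x + ε • w) (p.1.1, p.1.2 + 1) ∧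
        gcEntry n lam (x + ε • w) (p.1.1 + 1, p.1.2) ≤ gcEntry n lam (x + ε • w) (p.1.1, p.1.2) := by
      rw [Filter.eventually_all]
      rintro ⟨⟨i, j⟩, hij⟩
      simp only [gcEntry_add, gcEntry_smul]
      apply Filter.Eventually.and
      · by_cases he : ((i - 1, j), (i, j)) ∈ γ.E
        · exact ev _ _ _ _ ((hs i j hij).1.2 he)
        · exact Filter.Eventually.of_forall fun ε => by
            rw [(hw i j hij).1 he, (hx'.2 i j hij).1 he]
      · by_cases he : ((i, j - 1), (i, j)) ∈ γ.E
        · exact ev _ _ _ _ ((hs i j hij).2.2 he)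
        · exact Filter.Eventually.of_forall fun ε => by
            rw [(hw i j hij).2 he, (hx'.2 i j hij).2 he]
    obtain ⟨ε, hε, hpos⟩ := (ev2.and self_mem_nhdsWithin).exists
    have hpos : 0 < ε := hpos
    have hmem : x + ε • w ∈ psiGC n lam γ := by
      refine ⟨fun i j hij => hε ⟨(i, j), hij⟩, fun i j hij => ?_⟩
      simp only [gcEntry_add, gcEntry_smul]
      exact ⟨fun he => by rw [(hw i j hij).1 he, (hx'.2 i j hij).1 he],
        fun he => by rw [(hw i j hij).2 he, (hx'.2 i j hij).2 he]⟩
    have := vsub_mem_vectorSpan ℝ hmem hx'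
    rw [vsub_eq_sub, add_sub_cancel_left] at this
    have := (vectorSpan ℝ (psiGC n lam γ)).smul_mem ε⁻¹ this
    rwa [smul_smul, inv_mul_cancel₀ hpos.ne', one_smul] at this

/-- Vertices with two incoming edges. -/
def dblV (n : ℕ) (E : Set ((ℕ × ℕ) × (ℕ × ℕ))) : Set (GCIdx n) :=
  {p | ((p.1.1 - 1, p.1.2), (p.1.1, p.1.2)) ∈ E ∧ ((p.1.1, p.1.2 - 1), (p.1.1, p.1.2)) ∈ E}

/-- Restriction to the double vertices. -/
def resW (n : ℕ) (E : Set ((ℕ × ℕ) × (ℕ × ℕ))) : dirW n E →ₗ[ℝ] (dblV n E → ℝ) :=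
  (LinearMap.funLeft ℝ ℝ (fun p : dblV n E => p.1)).comp (dirW n E).subtype

lemma resW_inj (n E) : Function.Injective (resW n E) := by
  rw [← LinearMap.ker_eq_bot, LinearMap.ker_eq_bot']
  rintro ⟨y, hy⟩ h0
  have key : ∀ d i j, 1 ≤ i → 1 ≤ j → i + j + d = n + 1 → gcEntry n 0 y (i, j) = 0 := by
    intro d
    induction d with
    | zero => intro i j hi hj hd; rw [gcEntry_out (by omega)]; rfl
    | succ d ih =>
      intro i j hi hj hd
      have hij : (i, j) ∈ GCIdx n := mem_idx.2 (by omega)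
      by_cases h1 : ((i - 1, j), (i, j)) ∈ E
      · by_cases h2 : ((i, j - 1), (i, j)) ∈ E
        · have := congrFun h0 ⟨⟨(i, j), hij⟩, h1, h2⟩
          rw [gcEntry, dif_pos hij]
          exact this
        · rw [(hy i j hij).2 h2]; exact ih _ _ (by omega) hj (by omega)
      · rw [(hy i j hij).1 h1]; exact ih _ _ hi (by omega) (by omega)
  ext ⟨⟨i, j⟩, hij⟩
  have h' := mem_idx.1 hij
  have := key (n + 1 - (i + j)) i j h'.1 h'.2.1 (by omega)
  rw [gcEntry, dif_pos hij] at this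
  exact this

lemma gen_lin {n T lam γ} (S : Setup n T lam) (h : GoodFace n T γ) (c : ℕ × ℕ → ℝ → ℝ → ℝ) :
    ∀ d i j, 1 ≤ i → 1 ≤ j → i + j + d = n →
      let X := genX n 0 γ.E c
      (((i - 1, j), (i, j)) ∉ γ.E → X i j = X i (j + 1)) ∧
      (((i, j - 1), (i, j)) ∉ γ.E → X i j = X (i + 1) j) := by
  intro d
  induction d with
  | zero => ?_
  | succ d ih => ?_
  all_goals
    intro i j hi hj hd X
    have P : (i, j) ∉ γ.V → X (i + 1) j = X i (j + 1) := by
      first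
      | have e1 : X (i + 1) j = 0 := by
          simp only [X]; rw [genX, dif_pos (by omega)]; rfl
        have e2 : X i (j + 1) = 0 := by
          simp only [X]; rw [genX, dif_pos (by omega)]; rfl
        rw [e1, e2]
        exact fun _ => rfl
      | intro hv
        have A := (ih i (j + 1) hi (by omega) (by omega)).2
        have B := (ih (i + 1) j (by omega) hj (by omega)).1
        simp only [Nat.add_sub_cancel] at A B
        have A' := A fun he => hv (h.edge _ _ he).2.1
        have B' := B fun he => hv (h.edge _ _ he).2.1
        exact B'.trans A'.symm
    have eX : X i j = if ((i - 1, j), (i, j)) ∈ γ.E then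
        if ((i, j - 1), (i, j)) ∈ γ.E then c (i, j) (X i (j + 1)) (X (i + 1) j) else X (i + 1) j
        else X i (j + 1) := by
      simp only [X]; rw [genX, dif_neg (by omega)]; rfl
    refine ⟨fun h1 => by rw [eX, if_neg h1], fun h2 => ?_⟩
    by_cases h1 : ((i - 1, j), (i, j)) ∈ γ.E
    · rw [eX, if_pos h1, if_neg h2]
    · rw [eX, if_neg h1]
      refine (P fun hv => ?_).symm
      rcases h.inn _ _ hv with h3 | h3 | h3
      · simp at h3; omega
      · exact h1 h3.2
      · exact h2 h3.2

lemma resW_surj {n T lam γ} (S : Setup n T lam) (h : GoodFace n T γ) :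
    Function.Surjective (resW n γ.E) := by
  intro z
  let c : ℕ × ℕ → ℝ → ℝ → ℝ := fun p _ _ =>
    if hp : ∃ hp : p ∈ GCIdx n, (⟨p, hp⟩ : GCIdx n) ∈ dblV n γ.E then z ⟨⟨p, hp.1⟩, hp.2⟩ else 0
  have key := gen_lin S h c
  refine ⟨⟨genP n 0 γ.E c, ?_⟩, ?_⟩
  · intro i j hij
    obtain ⟨h1, h2, h3⟩ := mem_idx.1 hij
    rw [genP_entry (by omega) (by omega) (by omega), genP_entry (by omega) (by omega) (by omega),
      genP_entry (by omega) (by omega) (by omega)]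
    exact key (n - (i + j)) i j h1 h2 (by omega)
  · ext ⟨⟨⟨i, j⟩, hij⟩, hd⟩
    obtain ⟨h1, h2, h3⟩ := mem_idx.1 hij
    change genX n 0 γ.E c i j = _
    rw [genX, dif_neg (by omega), dif_pos hd.1, dif_pos hd.2]
    simp only [c]
    rw [dif_pos ⟨hij, hd⟩]

lemma dim_psi {n T lam γ} (S : Setup n T lam) (h : GoodFace n T γ) :
    GCdim n (psiGC n lam γ) = (dblV n γ.E).ncard := by
  rw [GCdim, dir_eq S h,
    (LinearEquiv.ofBijective (resW n γ.E) ⟨resW_inj n _, resW_surj S h⟩).finrank_eq]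
  have := Fintype.ofFinite (dblV n γ.E)
  rw [Module.finrank_fintype_fun_eq_card, ← Nat.card_coe_set_eq, Nat.card_eq_fintype_card]

lemma ldim_good {n T lam γ} (S : Setup n T lam) (h : GoodFace n T γ) :
    ldim γ = (dblV n γ.E).ncard := by
  have hVf : γ.V.Finite := by
    apply (Set.finite_Iic (n, n)).subset
    rintro ⟨a, b⟩ hv
    have := h.bd _ _ hv
    exact ⟨by simp; omega, by simp; omega⟩
  have hEf : γ.E.Finite := by
    apply (hVf.prod hVf).subset
    rintro ⟨u, v⟩ he
    exact ⟨(h.edge _ _ he).2.1, (h.edge _ _ he).2.2⟩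
  let H : Set ((ℕ × ℕ) × (ℕ × ℕ)) := {e | e ∈ γ.E ∧ e.2 = (e.1.1 + 1, e.1.2)}
  let K : Set ((ℕ × ℕ) × (ℕ × ℕ)) := {e | e ∈ γ.E ∧ e.2 = (e.1.1, e.1.2 + 1)}
  have hHf : H.Finite := hEf.subset fun e he => he.1
  have hKf : K.Finite := hEf.subset fun e he => he.1
  have hHK : γ.E = H ∪ K := by
    ext ⟨u, v⟩
    constructor
    · intro he
      rcases (h.edge _ _ he).1 with h1 | h1
      · exact Or.inl ⟨he, h1⟩
      · exact Or.inr ⟨he, h1⟩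
    · rintro (h1 | h1) <;> exact h1.1
  have hdis : Disjoint H K := by
    rw [Set.disjoint_left]
    rintro ⟨u, v⟩ h1 h2
    have := h1.2.symm.trans h2.2
    simp at this
  have c1 : γ.E.ncard = H.ncard + K.ncard := by
    conv_lhs => rw [hHK]
    exact Set.ncard_union_eq hdis hHf hKf
  have c2 : (Prod.snd '' H).ncard = H.ncard := by
    apply Set.ncard_image_of_injOn
    rintro ⟨⟨a, b⟩, v⟩ h1 ⟨⟨a', b'⟩, v'⟩ h2 e
    have e1 := h1.2
    have e2 := h2.2
    simp only at e e1 e2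
    subst e
    rw [e1] at e2
    simp at e2
    simp [e2]
  have c3 : (Prod.snd '' K).ncard = K.ncard := by
    apply Set.ncard_image_of_injOn
    rintro ⟨⟨a, b⟩, v⟩ h1 ⟨⟨a', b'⟩, v'⟩ h2 e
    have e1 := h1.2
    have e2 := h2.2
    simp only at e e1 e2
    subst e
    rw [e1] at e2
    simp at e2
    simp [e2]
  have hz : ((0, 0) : ℕ × ℕ) ∈ γ.V := (bdry_left S h n 0 (by omega)).1
  have c4 : Prod.snd '' H ∪ Prod.snd '' K = γ.V \ {(0, 0)} := by
    ext ⟨a, b⟩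
    constructor
    · rintro (⟨⟨u, v⟩, h1, rfl⟩ | ⟨⟨u, v⟩, h1, rfl⟩)
      · refine ⟨(h.edge _ _ h1.1).2.2, fun hh => ?_⟩
        have := h1.2.symm.trans hh
        simp at this
      · refine ⟨(h.edge _ _ h1.1).2.2, fun hh => ?_⟩
        have := h1.2.symm.trans hh
        simp at this
    · rintro ⟨hv, hne⟩
      rcases h.inn _ _ hv with h1 | h1 | h1
      · exact absurd h1 hne
      · exact Or.inl ⟨_, ⟨h1.2, by ext <;> simp; omega⟩, rfl⟩
      · exact Or.inr ⟨_, ⟨h1.2, by ext <;> simp; omega⟩, rfl⟩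
  have c5 : Prod.snd '' H ∩ Prod.snd '' K = Subtype.val '' dblV n γ.E := by
    ext ⟨a, b⟩
    constructor
    · rintro ⟨⟨⟨⟨u1, u2⟩, v⟩, h1, e1⟩, ⟨⟨⟨w1, w2⟩, v'⟩, h2, e2⟩⟩
      have f1 := h1.2
      have f2 := h2.2
      simp only at e1 e2 f1 f2
      subst e1 e2
      simp only [Prod.mk.injEq] at f1 f2
      have hb := h.bd _ _ (h.edge _ _ h1.1).2.2
      refine ⟨⟨(a, b), mem_idx.2 (by omega)⟩, ⟨?_, ?_⟩, rfl⟩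
      · have := h1.1
        rw [show (u1, u2) = (a - 1, b) by ext <;> simp <;> omega] at this
        exact this
      · have := h2.1
        rw [show (w1, w2) = (a, b - 1) by ext <;> simp <;> omega] at this
        exact this
    · rintro ⟨⟨⟨i, j⟩, hij⟩, ⟨h1, h2⟩, hh⟩
      obtain ⟨g1, g2, g3⟩ := mem_idx.1 hij
      rw [← hh]
      exact ⟨⟨_, ⟨h1, by ext <;> simp; omega⟩, rfl⟩, ⟨_, ⟨h2, by ext <;> simp; omega⟩, rfl⟩⟩
  have c6 := Set.ncard_union_add_ncard_inter (Prod.snd '' H) (Prod.snd '' K)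
    (hHf.image _) (hKf.image _)
  rw [c4, c5, c2, c3, Set.ncard_image_of_injective _ Subtype.val_injective] at c6
  have c7 := Set.ncard_diff_singleton_add_one hz hVf
  unfold ldim
  omega

end helpers

/-- Theorem 1.9. For a sequence `k` of positive integers with
`n = k_1 + ⋯ + k_s` and `λ` with block structure `k`, there is an order
isomorphism from the face poset of the Gelfand–Cetlin polytope `P_λ` to the
face poset of the ladder diagram `Γ_k` preserving dimensions. -/
theorem faceLattice_iso (s : ℕ) (hs : 1 ≤ s) (k : ℕ → ℕ) (hk : ∀ i < s, 0 < k i)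
    (lam : ℕ → ℝ) (hlam : HasBlockStructure s k lam) :
    ∃ φ : {F : Set (GCIdx (nseq k s) → ℝ) // IsGCFace (nseq k s) lam F} →
          {γ : LGraph // IsLadderFace s k γ},
      Function.Bijective φ ∧
      (∀ F F', F.1 ⊆ F'.1 ↔ (φ F).1 ≤ (φ F').1) ∧
      (∀ F, (GCdim (nseq k s) F.1 : ℤ) = ldim (φ F).1) := by
  have S : Setup (nseq k s) (terminals s k) lam := by
    refine ⟨?_, fun a b h => term_sum h, term_left s k, term_right s k,
      fun i j h1 h2 h3 => (lam_step hlam i j h1 h2 h3).1,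
      fun i j h1 h2 h3 => (lam_step hlam i j h1 h2 h3).2⟩
    have h1 := nseq_mono k hs
    have h2 := nseq_succ k 0
    have h3 := hk 0 hs
    simp only [zero_add] at h2
    omega
  have hsub : ∀ F, IsGCFace (nseq k s) lam F → F ⊆ GCPoly (nseq k s) lam := by
    rintro F ⟨-, SH, SV, -, -, rfl⟩ x hx
    exact hx.1
  have hord : ∀ F F', IsGCFace (nseq k s) lam F → IsGCFace (nseq k s) lam F' →
      (F ⊆ F' ↔ phiGC (nseq k s) lam F ≤ phiGC (nseq k s) lam F') :=
    fun F F' hF hF' => ⟨phi_mono, phi_refl hF hF'⟩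
  have hgood : ∀ F, IsGCFace (nseq k s) lam F →
      GoodFace (nseq k s) (terminals s k) (phiGC (nseq k s) lam F) :=
    fun F hF => phi_good S (hsub F hF) hF.1
  have hinj : ∀ F F', IsGCFace (nseq k s) lam F → IsGCFace (nseq k s) lam F' →
      phiGC (nseq k s) lam F = phiGC (nseq k s) lam F' → F = F' := fun F F' hF hF' h =>
    subset_antisymm ((hord F F' hF hF').2 h.le) ((hord F' F hF' hF).2 h.ge)
  refine ⟨fun F => ⟨phiGC (nseq k s) lam F.1, face_of_good (hgood F.1 F.2)⟩, ⟨?_, ?_⟩, ?_, ?_⟩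
  · rintro ⟨F, hF⟩ ⟨F', hF'⟩ h
    exact Subtype.ext (hinj F F' hF hF' (congrArg Subtype.val h))
  · rintro ⟨γ, hγ⟩
    have hg := good_of_face hγ
    exact ⟨⟨psiGC (nseq k s) lam γ, psi_face S hg⟩, Subtype.ext (phi_psi S hg)⟩
  · rintro ⟨F, hF⟩ ⟨F', hF'⟩
    exact hord F F' hF hF'
  · rintro ⟨F, hF⟩
    have hg := hgood F hF
    have e : F = psiGC (nseq k s) lam (phiGC (nseq k s) lam F) :=
      hinj _ _ hF (psi_face S hg) (phi_psi S hg).symm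
    change (GCdim (nseq k s) F : ℤ) = ldim (phiGC (nseq k s) lam F)
    rw [ldim_good S hg, ← dim_psi S hg, ← e]
end

section
/- Let F be a face of the Gelfand–Cetlin polytope P_λ, where λ has block structure k. Then the graph φ(F) is a subgraph of the ladder diagram Γ_k; that is, every edge of φ(F) is an edge of Γ_k. -/
open Classical

theorem nseq_mono_s1 (k : ℕ → ℕ) : Monotone (nseq k) := by
  intro a b h
  exact Finset.sum_le_sum_of_subset (Finset.range_mono h)

theorem ladderV_down {s : ℕ} {k : ℕ → ℕ} {a b c d : ℕ} (h : (a, b) ∈ ladderV s k)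
    (hc : c ≤ a) (hd : d ≤ b) : (c, d) ∈ ladderV s k := by
  obtain ⟨t, ht, h1, h2⟩ := h
  exact ⟨t, ht, le_trans hc h1, le_trans hd h2⟩

theorem gc_upper {n : ℕ} {lam : ℕ → ℝ} {x : GCIdx n → ℝ} (hx : x ∈ GCPoly n lam) :
    ∀ m a b : ℕ, 1 ≤ a → 1 ≤ b → a + b + m = n + 1 → gcEntry n lam x (a, b) ≤ lam a := by
  intro m
  induction m with
  | zero =>
    intro a b ha hb h
    have : (a, b) ∉ GCIdx n := by
      intro h'; have := h'.2.2; simp only at this; omega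
    simp [gcEntry, this]
  | succ m ih =>
    intro a b ha hb h
    exact (hx a b ⟨ha, hb, by simp only; omega⟩).1.trans (ih a (b + 1) ha (by omega) (by omega))

theorem gc_lower {n : ℕ} {lam : ℕ → ℝ} {x : GCIdx n → ℝ} (hx : x ∈ GCPoly n lam) :
    ∀ m a b : ℕ, 1 ≤ a → 1 ≤ b → a + b + m = n + 1 →
      lam (a + m) ≤ gcEntry n lam x (a, b) := by
  intro m
  induction m with
  | zero =>
    intro a b ha hb h
    have : (a, b) ∉ GCIdx n := by
      intro h'; have := h'.2.2; simp only at this; omega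
    simp [gcEntry, this]
  | succ m ih =>
    intro a b ha hb h
    have h1 := ih (a + 1) b (by omega) hb (by omega)
    rw [show a + 1 + m = a + (m + 1) by omega] at h1
    exact h1.trans (hx a b ⟨ha, hb, by simp only; omega⟩).2

theorem exists_block_s1 (k : ℕ → ℕ) (i : ℕ) (hi : 1 ≤ i) :
    ∀ s, i ≤ nseq k s → ∃ m < s, nseq k m < i ∧ i ≤ nseq k (m + 1) := by
  intro s
  induction s with
  | zero => intro h; simp [nseq] at h; omega
  | succ s ih =>
    intro h
    by_cases h' : i ≤ nseq k s
    · obtain ⟨m, hm, h2⟩ := ih h'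
      exact ⟨m, by omega, h2⟩
    · exact ⟨s, by omega, by omega, h⟩

theorem mem_ladderV_of_ne {s : ℕ} {k : ℕ → ℕ} {lam : ℕ → ℝ} (hlam : HasBlockStructure s k lam)
    {i j m : ℕ} (hi : 1 ≤ i) (hm : i + j + m = nseq k s + 1) (hj : 1 ≤ j)
    (h : lam i ≠ lam (i + m)) : (i, j) ∈ ladderV s k := by
  obtain ⟨r, hr, h1, h2⟩ := exists_block_s1 k i hi s (by omega)
  refine ⟨_, ⟨r + 1, hr, rfl⟩, h2, ?_⟩
  by_contra hc
  simp only at hc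
  have := nseq_mono_s1 k (show r + 1 ≤ s from hr)
  exact h (hlam.1 r hr i (i + m) h1 (by omega) (by omega))

theorem phiGC_subgraph (s : ℕ) (hs : 1 ≤ s) (k : ℕ → ℕ) (hk : ∀ i < s, 0 < k i)
    (lam : ℕ → ℝ) (hlam : HasBlockStructure s k lam)
    (F : Set (GCIdx (nseq k s) → ℝ)) (hF : IsGCFace (nseq k s) lam F) :
    (phiGC (nseq k s) lam F).E ⊆ ladderE s k ∧
    (phiGC (nseq k s) lam F).V ⊆ ladderV s k := by
  have hFP : ∀ x ∈ F, x ∈ GCPoly (nseq k s) lam := by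
    obtain ⟨-, SH, SV, -, -, rfl⟩ := hF
    exact fun x hx => hx.1
  have hE : phiE (nseq k s) lam F ⊆ ladderE s k := by
    rintro e (⟨i, hi, rfl | rfl⟩ | ⟨i, j, ⟨h1, h2, h3⟩, rfl, x, hx, hlt⟩ |
      ⟨i, j, ⟨h1, h2, h3⟩, rfl, x, hx, hlt⟩)
    · have h : (0, i + 1) ∈ ladderV s k :=
        ⟨_, ⟨0, by omega, rfl⟩, by simp, by simp [nseq] at hi ⊢; omega⟩
      exact ⟨ladderV_down h le_rfl (by omega), h, Or.inr rfl⟩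
    · have h : (i + 1, 0) ∈ ladderV s k :=
        ⟨_, ⟨s, le_rfl, rfl⟩, hi, by simp⟩
      exact ⟨ladderV_down h (by omega) le_rfl, h, Or.inl rfl⟩
    · simp only at h1 h2 h3
      obtain ⟨m, hm⟩ := Nat.exists_eq_add_of_le h3
      have hu := gc_upper (hFP x hx) m i (j + 1) h1 (by omega) (by omega)
      have hl := gc_lower (hFP x hx) (m + 1) i j h1 h2 (by omega)
      have h := mem_ladderV_of_ne hlam (m := m + 1) h1 (by omega) h2 (by
        intro h; linarith)
      exact ⟨ladderV_down h (by omega) le_rfl, h, Or.inl (by simp; omega)⟩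
    · simp only at h1 h2 h3
      obtain ⟨m, hm⟩ := Nat.exists_eq_add_of_le h3
      have hu := gc_upper (hFP x hx) (m + 1) i j h1 h2 (by omega)
      have hl := gc_lower (hFP x hx) m (i + 1) j (by omega) h2 (by omega)
      rw [show i + 1 + m = i + (m + 1) by omega] at hl
      have h := mem_ladderV_of_ne hlam (m := m + 1) h1 (by omega) h2 (by
        intro h; linarith)
      exact ⟨ladderV_down h le_rfl (by omega), h, Or.inr (by simp; omega)⟩
  refine ⟨hE, ?_⟩
  rintro v ⟨e, he, rfl | rfl⟩
  · exact (hE he).1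
  · exact (hE he).2.1
end

section
/- Let F be a face of the Gelfand–Cetlin polytope P_λ, where λ has block structure k. Then the graph φ(F) contains every terminal vertex (n_i, n−n_i), 0 ≤ i ≤ s, of the ladder diagram Γ_k, as well as the origin (0,0). -/
open Classical

/-- Lemma 2.2. For any face `F` of the Gelfand–Cetlin polytope
`P_λ`, the graph `φ(F)` contains every terminal vertex of the ladder diagram
`Γ_k` as well as the origin `(0,0)`. -/
theorem phiGC_contains_terminals (s : ℕ) (hs : 1 ≤ s) (k : ℕ → ℕ)
    (hk : ∀ i < s, 0 < k i) (lam : ℕ → ℝ) (hlam : HasBlockStructure s k lam)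
    (F : Set (GCIdx (nseq k s) → ℝ)) (hF : IsGCFace (nseq k s) lam F) :
    terminals s k ⊆ (phiGC (nseq k s) lam F).V ∧
    ((0, 0) : ℕ × ℕ) ∈ (phiGC (nseq k s) lam F).V := by
  have hpos : ∀ j, j < s → nseq k j < nseq k (j + 1) := by
    intro j hj
    have := hk j hj
    simp only [nseq, Finset.sum_range_succ]
    omega
  have hmono : ∀ a b, a ≤ b → nseq k a ≤ nseq k b := by
    intro a b hab
    exact Finset.sum_le_sum_of_subset (Finset.range_mono hab)
  have h0 : nseq k 0 = 0 := by simp [nseq]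
  have hn : 0 < nseq k s := by
    have h1 := hpos 0 hs
    have h2 := hmono (0 + 1) s hs
    omega
  refine ⟨?_, ((0, 0), (0, 1)), Or.inl ⟨0, hn, Or.inl rfl⟩, Or.inl rfl⟩
  rintro v ⟨i, his, rfl⟩
  rcases Nat.eq_zero_or_pos i with rfl | hi
  · refine ⟨((0, nseq k s - 1), (0, nseq k s - 1 + 1)),
      Or.inl ⟨nseq k s - 1, by omega, Or.inl rfl⟩, Or.inr ?_⟩
    ext <;> simp only [h0] <;> omega
  rcases Nat.lt_or_ge i s with hlt | hge
  · obtain ⟨⟨x, hx⟩, -⟩ := hF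
    have hl := hlam.2 i hi hlt
    have h1 : 0 < nseq k i := by
      have h1 := hpos 0 hs
      have h2 := hmono (0 + 1) i hi
      omega
    have h2 : nseq k i < nseq k s := lt_of_lt_of_le (hpos i hlt) (hmono _ _ hlt)
    have hm : (nseq k i, nseq k s - nseq k i) ∈ GCIdx (nseq k s) := by
      simp only [GCIdx, Set.mem_setOf_eq]
      omega
    have e1 : gcEntry (nseq k s) lam x (nseq k i, nseq k s - nseq k i + 1)
        = lam (nseq k i) := by
      unfold gcEntry
      rw [dif_neg]
      simp only [GCIdx, Set.mem_setOf_eq]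
      omega
    have e2 : gcEntry (nseq k s) lam x (nseq k i + 1, nseq k s - nseq k i)
        = lam (nseq k i + 1) := by
      unfold gcEntry
      rw [dif_neg]
      simp only [GCIdx, Set.mem_setOf_eq]
      omega
    by_cases hc : gcEntry (nseq k s) lam x (nseq k i, nseq k s - nseq k i) < lam (nseq k i)
    · exact ⟨_, Or.inr (Or.inl ⟨_, _, hm, rfl, x, hx, by rw [e1]; exact hc⟩), Or.inr rfl⟩
    · refine ⟨_, Or.inr (Or.inr ⟨_, _, hm, rfl, x, hx, ?_⟩), Or.inr rfl⟩
      rw [e2]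
      exact lt_of_lt_of_le hl (not_lt.mp hc)
  · obtain rfl : i = s := le_antisymm his hge
    refine ⟨((nseq k i - 1, 0), (nseq k i - 1 + 1, 0)),
      Or.inl ⟨nseq k i - 1, by omega, Or.inr rfl⟩, Or.inr ?_⟩
    ext <;> simp only [] <;> omega
end

section
/- Let F be a face of the Gelfand–Cetlin polytope P_λ, where λ has block structure k. Then every edge of φ(F) lies on a positive path (a directed path from the origin (0,0) to a terminal vertex of Γ_k) that is entirely contained in φ(F). -/
open Classical

/-- The strict inequality across the vertex `(a,b)` between the boxes `(a+1,b)` and `(a,b+1)`. -/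
def crossLt (n : ℕ) (lam : ℕ → ℝ) (F : Set (GCIdx n → ℝ)) (a b : ℕ) : Prop :=
  ∃ x ∈ F, gcEntry n lam x (a + 1, b) < gcEntry n lam x (a, b + 1)

theorem phiE_step (n : ℕ) (lam : ℕ → ℝ) (F : Set (GCIdx n → ℝ)) (u v : ℕ × ℕ)
    (he : (u, v) ∈ phiE n lam F) : gridStep u v ∧ v.1 + v.2 ≤ n := by
  obtain ⟨u1, u2⟩ := u
  obtain ⟨v1, v2⟩ := v
  simp only [phiE, GCIdx, Set.mem_setOf_eq, Prod.mk.injEq] at he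
  simp only [gridStep, Prod.mk.injEq]
  rcases he with ⟨i, hi, h | h⟩ | ⟨i, j, hij, h, -⟩ | ⟨i, j, hij, h, -⟩ <;> omega

/-- An incoming edge at an interior vertex gives a strict inequality across it. -/
theorem cross_of_in (n : ℕ) (lam : ℕ → ℝ) (F : Set (GCIdx n → ℝ)) (hF : F ⊆ GCPoly n lam)
    (u : ℕ × ℕ) (a b : ℕ) (ha : 1 ≤ a) (hb : 1 ≤ b)
    (he : (u, (a, b)) ∈ phiE n lam F) : crossLt n lam F a b := by
  obtain ⟨u1, u2⟩ := u
  simp only [phiE, Set.mem_setOf_eq, Prod.mk.injEq] at he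
  rcases he with ⟨i, hi, h | h⟩ | ⟨i, j, hij, ⟨-, rfl, rfl⟩, x, hx, h⟩ |
    ⟨i, j, hij, ⟨-, rfl, rfl⟩, x, hx, h⟩
  · omega
  · omega
  · exact ⟨x, hx, lt_of_le_of_lt (hF hx a b hij).2 h⟩
  · exact ⟨x, hx, lt_of_lt_of_le h (hF hx a b hij).1⟩

/-- An outgoing edge at an interior vertex gives a strict inequality across it. -/
theorem cross_of_out (n : ℕ) (lam : ℕ → ℝ) (F : Set (GCIdx n → ℝ)) (hF : F ⊆ GCPoly n lam)
    (v : ℕ × ℕ) (a b : ℕ) (ha : 1 ≤ a) (hb : 1 ≤ b)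
    (he : ((a, b), v) ∈ phiE n lam F) : crossLt n lam F a b := by
  obtain ⟨v1, v2⟩ := v
  simp only [phiE, Set.mem_setOf_eq, Prod.mk.injEq] at he
  rcases he with ⟨i, hi, h | h⟩ | ⟨i, j, hij, ⟨⟨h1, rfl⟩, -⟩, x, hx, h⟩ |
    ⟨i, j, hij, ⟨⟨rfl, h1⟩, -⟩, x, hx, h⟩
  · omega
  · omega
  · obtain rfl : i = a + 1 := by omega
    refine ⟨x, hx, lt_of_lt_of_le h (hF hx a (b + 1) ?_).2⟩
    simp only [GCIdx, Set.mem_setOf_eq] at hij ⊢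
    omega
  · obtain rfl : j = b + 1 := by omega
    refine ⟨x, hx, lt_of_le_of_lt (hF hx (a + 1) b ?_).1 h⟩
    simp only [GCIdx, Set.mem_setOf_eq] at hij ⊢
    omega

theorem in_of_cross (n : ℕ) (lam : ℕ → ℝ) (F : Set (GCIdx n → ℝ))
    (a b : ℕ) (ha : 1 ≤ a) (hb : 1 ≤ b) (hab : a + b ≤ n)
    (h : crossLt n lam F a b) : ∃ u, (u, (a, b)) ∈ phiE n lam F := by
  obtain ⟨x, hx, h⟩ := h
  by_cases h1 : gcEntry n lam x (a, b) < gcEntry n lam x (a, b + 1)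
  · exact ⟨(a - 1, b), Or.inr (Or.inl ⟨a, b, ⟨ha, hb, hab⟩, rfl, x, hx, h1⟩)⟩
  · exact ⟨(a, b - 1), Or.inr (Or.inr ⟨a, b, ⟨ha, hb, hab⟩, rfl, x, hx,
      lt_of_lt_of_le h (not_lt.mp h1)⟩)⟩

theorem out_of_cross (n : ℕ) (lam : ℕ → ℝ) (F : Set (GCIdx n → ℝ))
    (a b : ℕ) (ha : 1 ≤ a) (hb : 1 ≤ b) (hab : a + b < n)
    (h : crossLt n lam F a b) : ∃ v, ((a, b), v) ∈ phiE n lam F := by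
  obtain ⟨x, hx, h⟩ := h
  by_cases h1 : gcEntry n lam x (a + 1, b) < gcEntry n lam x (a + 1, b + 1)
  · exact ⟨(a + 1, b), Or.inr (Or.inl ⟨a + 1, b, ⟨by simp, hb, by simp only; omega⟩,
      rfl, x, hx, h1⟩)⟩
  · exact ⟨(a, b + 1), Or.inr (Or.inr ⟨a, b + 1, ⟨ha, by simp, by simp only; omega⟩,
      rfl, x, hx, lt_of_le_of_lt (not_lt.mp h1) h⟩)⟩

theorem phiE_out (n : ℕ) (lam : ℕ → ℝ) (F : Set (GCIdx n → ℝ)) (hF : F ⊆ GCPoly n lam)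
    (u v : ℕ × ℕ) (he : (u, v) ∈ phiE n lam F) (hv : v.1 + v.2 < n) :
    ∃ w, (v, w) ∈ phiE n lam F := by
  obtain ⟨a, b⟩ := v
  simp only at hv
  rcases Nat.eq_zero_or_pos a with rfl | ha
  · exact ⟨(0, b + 1), Or.inl ⟨b, by omega, Or.inl rfl⟩⟩
  rcases Nat.eq_zero_or_pos b with rfl | hb
  · exact ⟨(a + 1, 0), Or.inl ⟨a, by omega, Or.inr rfl⟩⟩
  exact out_of_cross n lam F a b ha hb hv (cross_of_in n lam F hF u a b ha hb he)

theorem phiE_in (n : ℕ) (lam : ℕ → ℝ) (F : Set (GCIdx n → ℝ)) (hF : F ⊆ GCPoly n lam)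
    (u v : ℕ × ℕ) (he : (u, v) ∈ phiE n lam F) (hu : 0 < u.1 + u.2) :
    ∃ w, (w, u) ∈ phiE n lam F := by
  have hs := phiE_step n lam F u v he
  obtain ⟨a, b⟩ := u
  obtain ⟨c, d⟩ := v
  simp only [gridStep, Prod.mk.injEq] at hu hs
  rcases Nat.eq_zero_or_pos a with rfl | ha
  · obtain ⟨b, rfl⟩ : ∃ b', b = b' + 1 := ⟨b - 1, by omega⟩
    exact ⟨(0, b), Or.inl ⟨b, by omega, Or.inl rfl⟩⟩
  rcases Nat.eq_zero_or_pos b with rfl | hb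
  · obtain ⟨a, rfl⟩ : ∃ a', a = a' + 1 := ⟨a - 1, by omega⟩
    exact ⟨(a, 0), Or.inl ⟨a, by omega, Or.inr rfl⟩⟩
  exact in_of_cross n lam F a b ha hb (by omega) (cross_of_out n lam F hF (c, d) a b ha hb he)

theorem phiE_terminal (s : ℕ) (k : ℕ → ℕ) (lam : ℕ → ℝ) (hlam : HasBlockStructure s k lam)
    (F : Set (GCIdx (nseq k s) → ℝ)) (hF : F ⊆ GCPoly (nseq k s) lam)
    (u v : ℕ × ℕ) (he : (u, v) ∈ phiE (nseq k s) lam F) (hv : v.1 + v.2 = nseq k s) :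
    v ∈ terminals s k := by
  obtain ⟨a, b⟩ := v
  simp only at hv
  suffices h : ∃ i ≤ s, a = nseq k i by
    obtain ⟨i, hi, h⟩ := h
    exact ⟨i, hi, Prod.ext h (by simp only; omega)⟩
  rcases Nat.eq_zero_or_pos a with rfl | ha
  · exact ⟨0, by omega, by simp [nseq]⟩
  rcases Nat.eq_zero_or_pos b with rfl | hb
  · exact ⟨s, le_rfl, by omega⟩
  obtain ⟨x, -, hx⟩ := cross_of_in _ lam F hF u a b ha hb he
  have n1 : (a + 1, b) ∉ GCIdx (nseq k s) := by
    simp only [GCIdx, Set.mem_setOf_eq]; omega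
  have n2 : (a, b + 1) ∉ GCIdx (nseq k s) := by
    simp only [GCIdx, Set.mem_setOf_eq]; omega
  simp only [gcEntry, n1, n2, dif_neg, not_false_eq_true] at hx
  have hex : ∃ i, a ≤ nseq k i := ⟨s, by omega⟩
  have hle : Nat.find hex ≤ s := Nat.find_min' hex (by omega)
  refine ⟨Nat.find hex, hle, ?_⟩
  have hspec := Nat.find_spec hex
  have hmin := fun m (hm : m < Nat.find hex) => Nat.find_min hex hm
  generalize Nat.find hex = i at *
  by_contra hne
  rcases i with _ | i
  · simp [nseq] at hspec
    omega
  · have h1 := hmin i (by omega)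
    have := hlam.1 i (by omega) a (a + 1) (by omega) (by omega) (by omega)
    linarith

theorem back_path (E : Set ((ℕ × ℕ) × (ℕ × ℕ)))
    (hstep : ∀ u v, (u, v) ∈ E → gridStep u v)
    (hin : ∀ u v, (u, v) ∈ E → 0 < u.1 + u.2 → ∃ w, (w, u) ∈ E) :
    ∀ (m : ℕ) (u v : ℕ × ℕ), (u, v) ∈ E → u.1 + u.2 = m →
      ∃ f : ℕ → ℕ × ℕ, f 0 = (0, 0) ∧ f m = u ∧ f (m + 1) = v ∧
        ∀ i < m + 1, (f i, f (i + 1)) ∈ E := by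
  intro m
  induction m with
  | zero =>
    intro u v he hu
    have hu0 : u = (0, 0) := by
      ext <;> simp only <;> omega
    refine ⟨fun i => if i = 0 then u else v, by simp [hu0], by simp, by simp, ?_⟩
    intro i hi
    obtain rfl : i = 0 := by omega
    simpa using he
  | succ m ih =>
    intro u v he hu
    obtain ⟨w, hw⟩ := hin u v he (by omega)
    have hws : w.1 + w.2 = m := by
      rcases hstep w u hw with h | h <;> rw [h] at hu <;> simp only at hu <;> omega
    obtain ⟨f, f0, f1, f2, f3⟩ := ih w u hw hws
    refine ⟨fun i => if i ≤ m + 1 then f i else v, by simp [f0], by simp [f2], by simp, ?_⟩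
    intro i hi
    rcases Nat.lt_or_ge i (m + 1) with h | h
    · have := f3 i h
      simpa [h.le, Nat.succ_le_of_lt h, show i ≤ m by omega] using this
    · obtain rfl : i = m + 1 := by omega
      simpa [f2] using he

theorem forward_path (n : ℕ) (E : Set ((ℕ × ℕ) × (ℕ × ℕ)))
    (hstep : ∀ u v, (u, v) ∈ E → gridStep u v)
    (hout : ∀ u v, (u, v) ∈ E → v.1 + v.2 < n → ∃ w, (v, w) ∈ E) :
    ∀ (d m : ℕ) (f : ℕ → ℕ × ℕ), m + 1 + d = n → (f (m + 1)).1 + (f (m + 1)).2 = m + 1 →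
      (∀ i < m + 1, (f i, f (i + 1)) ∈ E) →
      ∃ g : ℕ → ℕ × ℕ, (∀ i ≤ m + 1, g i = f i) ∧ (g n).1 + (g n).2 = n ∧
        ∀ i < n, (g i, g (i + 1)) ∈ E := by
  intro d
  induction d with
  | zero =>
    intro m f hm hf he
    obtain rfl : m + 1 = n := by omega
    exact ⟨f, fun _ _ => rfl, hf, he⟩
  | succ d ih =>
    intro m f hm hf he
    obtain ⟨w, hw⟩ := hout _ _ (he m (by omega)) (by omega)
    obtain ⟨g, g1, g2, g3⟩ := ih (m + 1) (fun i => if i ≤ m + 1 then f i else w)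
      (by omega) (by
        have : w.1 + w.2 = m + 1 + 1 := by
          rcases hstep _ _ hw with h | h <;> rw [h] <;> simp only <;> omega
        simpa using this) (by
        intro i hi
        rcases Nat.lt_or_ge i (m + 1) with h | h
        · have := he i h
          simpa [h.le, show i ≤ m by omega] using this
        · obtain rfl : i = m + 1 := by omega
          simpa using hw)
    refine ⟨g, fun i hi => ?_, g2, g3⟩
    rw [g1 i (by omega)]
    simp [hi]

/-- Lemma 2.3. For any face `F` of the Gelfand–Cetlin polytope
`P_λ`, every edge of `φ(F)` extends to a positive path lying entirely in `φ(F)`. -/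
theorem phiGC_edge_extends (s : ℕ) (hs : 1 ≤ s) (k : ℕ → ℕ) (hk : ∀ i < s, 0 < k i)
    (lam : ℕ → ℝ) (hlam : HasBlockStructure s k lam)
    (F : Set (GCIdx (nseq k s) → ℝ)) (hF : IsGCFace (nseq k s) lam F) :
    ∀ e ∈ (phiGC (nseq k s) lam F).E, ∃ p : LGraph,
      IsPositivePath s k p ∧ e ∈ p.E ∧
      p.V ⊆ (phiGC (nseq k s) lam F).V ∧ p.E ⊆ (phiGC (nseq k s) lam F).E := by
  obtain ⟨-, SH, SV, -, -, rfl⟩ := hF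
  have hF : GCFaceOf (nseq k s) lam SH SV ⊆ GCPoly (nseq k s) lam := fun x hx => hx.1
  generalize GCFaceOf (nseq k s) lam SH SV = F at hF
  rintro ⟨u, v⟩ he
  change (u, v) ∈ phiE (nseq k s) lam F at he
  have hstep := fun u v h => (phiE_step (nseq k s) lam F u v h).1
  have huv := phiE_step _ lam F u v he
  obtain ⟨f, f0, f1, f2, f3⟩ := back_path (phiE (nseq k s) lam F) hstep
    (phiE_in _ lam F hF) (u.1 + u.2) u v he rfl
  have hv : v.1 + v.2 = u.1 + u.2 + 1 := by
    rcases huv.1 with h | h <;> rw [h] <;> simp only <;> omega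
  obtain ⟨g, g1, g2, g3⟩ := forward_path (nseq k s) (phiE (nseq k s) lam F) hstep
    (phiE_out _ lam F hF) (nseq k s - (u.1 + u.2 + 1)) (u.1 + u.2) f (by omega)
    (by rw [f2]; exact hv) f3
  have hpos : 0 < nseq k s := by omega
  have hterm : g (nseq k s) ∈ terminals s k := by
    obtain ⟨N, hN⟩ : ∃ N, nseq k s = N + 1 := ⟨nseq k s - 1, by omega⟩
    have h := g3 N (by omega)
    rw [← hN] at h
    exact phiE_terminal s k lam hlam F hF _ _ h g2
  have hmono : ∀ d i, i + d = nseq k s →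
      (g i).1 ≤ (g (nseq k s)).1 ∧ (g i).2 ≤ (g (nseq k s)).2 := by
    intro d
    induction d with
    | zero =>
      intro i hi
      rw [show i = nseq k s by omega]
      exact ⟨le_rfl, le_rfl⟩
    | succ d ih =>
      intro i hi
      have h1 := ih (i + 1) (by omega)
      rcases hstep _ _ (g3 i (by omega)) with h | h <;> rw [h] at h1 <;>
        simp only at h1 <;> omega
  refine ⟨⟨{v | ∃ i ≤ nseq k s, v = g i}, {e | ∃ i < nseq k s, e = (g i, g (i + 1))}⟩,
    ⟨nseq k s, g, by rw [g1 0 (by omega), f0], hterm, fun i hi => hstep _ _ (g3 i hi),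
      fun i hi => ⟨_, hterm, hmono (nseq k s - i) i (by omega)⟩, rfl, rfl⟩, ?_, ?_, ?_⟩
  · exact ⟨u.1 + u.2, by omega, by rw [g1 _ (by omega), g1 _ (by omega), f1, f2]⟩
  · rintro _ ⟨i, hi, rfl⟩
    rcases Nat.lt_or_ge i (nseq k s) with h | h
    · exact ⟨_, g3 i h, Or.inl rfl⟩
    · obtain ⟨N, hN⟩ : ∃ N, i = N + 1 := ⟨i - 1, by omega⟩
      exact ⟨_, g3 N (by omega), Or.inr (by rw [hN])⟩
  · rintro _ ⟨i, hi, rfl⟩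
    exact g3 i hi
end
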